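/- arXiv:1005.1183 — 3 statements merged into one kernel-verified Lean document; each statement's English description precedes it below -/
import Mathlib

section
/- Let ρ, σ ∈ ℝ satisfy 1 − σ² > 0 and 1 − 2ρ² + σ > 0, set ξ = 1 − 2ρ² + σ, η = (1+σ)/(1−σ), Q(x,y) = (1−ρ²)x² − 2(σ−ρ²)xy + (1−ρ²)y², and define f(x,y) = (1/(2π))·exp((ρx + ρy − √η·√(Q(x,y)))/ξ)/√(Q(x,y)) for (x,y) ≠ (0,0). Then for all u, v ∈ ℝ, the function (x,y) ↦ f(x,y)·exp(i(ux+vy)) is integrable on ℝ² and ∫∫_{ℝ²} f(x,y) exp(i(ux+vy)) dx dy = [1 + (1−ρ²)u² − 2iρu + (1−ρ²)v² − 2iρv + 2(σ−ρ²)uv]^{−1/2}, where the complex power is the principal branch. -/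
open MeasureTheory

/-- The quadratic form `Q(x,y) = (1-ρ²)x² - 2(σ-ρ²)xy + (1-ρ²)y²`. -/
noncomputable def Qform (ρ σ x y : ℝ) : ℝ :=
  (1 - ρ ^ 2) * x ^ 2 - 2 * (σ - ρ ^ 2) * x * y + (1 - ρ ^ 2) * y ^ 2

/-- The joint density of `(AC, BC)`. -/
noncomputable def jointDensity (ρ σ x y : ℝ) : ℝ :=
  (1 / (2 * Real.pi)) *
    Real.exp ((ρ * x + ρ * y -
      Real.sqrt ((1 + σ) / (1 - σ)) * Real.sqrt (Qform ρ σ x y)) / (1 - 2 * ρ ^ 2 + σ)) /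
    Real.sqrt (Qform ρ σ x y)

/-!
The radial factor `e ^ (-a r) / r` is a Gaussian mixture,
`√π / 2 * e ^ (-a r) / r = ∫ c in (0, ∞), c⁻² e ^ (-r² / c² - a² c² / 4)`, by the
Cauchy–Schlömilch formula. After exchanging the integrals, the planar one is Gaussian and
contributes `c²`, which cancels the weight `c⁻²`; what remains is a half-line Gaussian integral
in `c`, so the Laplace transform of the planar Yukawa kernel at a complex frequency `l` is
`2 π (a² - ∑ lᵢ²) ^ (-1/2)`. The joint density is this kernel, exponentially tilted, in coordinates
proportional to `x + y` and `x - y`, in which `Q` becomes the squared Euclidean norm.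
-/

open Set
open scoped Real

theorem ofReal_mul_cpow_of_nonneg {r : ℝ} (hr : 0 ≤ r) (z s : ℂ) :
    ((r : ℂ) * z) ^ s = (r : ℂ) ^ s * z ^ s := by
  rcases eq_or_ne s 0 with rfl | hs
  · simp
  rcases hr.eq_or_lt with rfl | hr
  · simp [Complex.zero_cpow hs]
  rcases eq_or_ne z 0 with rfl | hz
  · simp [Complex.zero_cpow hs]
  have hr' : (r : ℂ) ≠ 0 := Complex.ofReal_ne_zero.2 hr.ne'
  rw [Complex.cpow_def_of_ne_zero (mul_ne_zero hr' hz), Complex.cpow_def_of_ne_zero hr',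
    Complex.cpow_def_of_ne_zero hz, Complex.log_ofReal_mul hr hz, ← Complex.exp_add,
    Complex.ofReal_log hr.le, add_mul]

theorem ofReal_cpow_one_half {r : ℝ} (hr : 0 ≤ r) : (r : ℂ) ^ (1 / 2 : ℂ) = (√r : ℝ) := by
  rw [Real.sqrt_eq_rpow, Complex.ofReal_cpow hr]
  norm_num

theorem ofReal_cpow_neg_one_half {r : ℝ} (hr : 0 ≤ r) :
    (r : ℂ) ^ (-(1 : ℂ) / 2) = ((√r)⁻¹ : ℝ) := by
  rw [neg_div, Complex.cpow_neg, ofReal_cpow_one_half hr, Complex.ofReal_inv]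

theorem pi_div_quarter_cpow_one_half {z : ℂ} (hz : 0 < z.re) :
    (π / (z / 4)) ^ (1 / 2 : ℂ) = 2 * √π * z ^ (-(1 : ℂ) / 2) := by
  have harg : z.arg ≠ π := fun h => (Complex.arg_eq_pi_iff.1 h).1.not_gt hz
  have hsqrt : √(4 * π) = 2 * √π := by
    rw [Real.sqrt_mul (by norm_num), show (4 : ℝ) = 2 ^ 2 by norm_num, Real.sqrt_sq (by norm_num)]
  have hdiv : π / (z / 4) = ((4 * π : ℝ) : ℂ) * z⁻¹ := by
    push_cast
    rw [div_div_eq_mul_div, mul_comm, div_eq_mul_inv]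
  rw [hdiv, ofReal_mul_cpow_of_nonneg (by positivity), ofReal_cpow_one_half (by positivity), hsqrt,
    Complex.inv_cpow _ _ harg, ← Complex.cpow_neg, neg_div]
  push_cast
  rfl

section OneVariable

variable {E : Type*} [NormedAddCommGroup E] [NormedSpace ℝ E]

theorem integral_eq_zero_of_odd {G : Type*} [MeasurableSpace G] [AddGroup G]
    [MeasurableNeg G] {μ : Measure G} [μ.IsNegInvariant] {g : G → E} (hg : g.Odd) :
    ∫ x, g x ∂μ = 0 := by
  have h : ∫ x, g (-x) ∂μ = ∫ x, g x ∂μ := integral_neg_eq_self g μ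
  rw [funext hg, integral_neg] at h
  have : IsAddTorsionFree E := .of_isTorsionFree ℝ E
  exact self_eq_neg.1 h.symm

theorem integral_Ioi_inv_sq_smul_comp_inv (g : ℝ → E) :
    ∫ x in Ioi (0 : ℝ), (x ^ 2)⁻¹ • g x⁻¹ = ∫ x in Ioi (0 : ℝ), g x := by
  rw [← integral_comp_rpow_Ioi g (p := -1) (by norm_num)]
  refine setIntegral_congr_fun measurableSet_Ioi fun x (hx : 0 < x) => ?_
  norm_num [Real.rpow_neg hx.le]

/-- The solution `x > 0` of `a * x - b / x = w`, that is, the inverse of the substitution in the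
Cauchy–Schlömilch formula. -/
noncomputable def schlomilchRoot (a b w : ℝ) : ℝ :=
  (w + √(w ^ 2 + 4 * (a * b))) / (2 * a)

variable {a b : ℝ}

theorem abs_lt_sqrt_sq_add {w c : ℝ} (hc : 0 < c) : |w| < √(w ^ 2 + c) := by
  rw [← Real.sqrt_sq_eq_abs]
  exact Real.sqrt_lt_sqrt (sq_nonneg w) (lt_add_of_pos_right _ hc)

theorem schlomilchRoot_pos (ha : 0 < a) (hb : 0 < b) (w : ℝ) : 0 < schlomilchRoot a b w := by
  have h : |w| < √(w ^ 2 + 4 * (a * b)) := abs_lt_sqrt_sq_add (by positivity)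
  exact div_pos (by linarith [neg_abs_le w]) (by positivity)

theorem mul_schlomilchRoot_sub_div (ha : 0 < a) (hb : 0 < b) (w : ℝ) :
    a * schlomilchRoot a b w - b / schlomilchRoot a b w = w := by
  have hr := schlomilchRoot_pos ha hb w
  have hs : √(w ^ 2 + 4 * (a * b)) ^ 2 = w ^ 2 + 4 * (a * b) := Real.sq_sqrt (by positivity)
  rw [sub_eq_iff_eq_add, ← sub_eq_iff_eq_add', eq_div_iff hr.ne', schlomilchRoot]
  set s := √(w ^ 2 + 4 * (a * b))
  field_simp
  linear_combination hs

theorem schlomilchRoot_mul_sub_div (ha : 0 < a) (hb : 0 < b) {x : ℝ} (hx : 0 < x) :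
    schlomilchRoot a b (a * x - b / x) = x := by
  have hs : √((a * x - b / x) ^ 2 + 4 * (a * b)) = a * x + b / x := by
    rw [← Real.sqrt_sq (by positivity : 0 ≤ a * x + b / x)]
    congr 1
    field_simp
    ring
  rw [schlomilchRoot, hs]
  field_simp
  ring

theorem image_schlomilchRoot_univ (ha : 0 < a) (hb : 0 < b) :
    schlomilchRoot a b '' univ = Ioi 0 := by
  rw [image_univ]
  exact Subset.antisymm (range_subset_iff.2 (schlomilchRoot_pos ha hb))
    fun x hx => ⟨a * x - b / x, schlomilchRoot_mul_sub_div ha hb hx⟩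

theorem hasDerivAt_schlomilchRoot (ha : 0 < a) (hb : 0 < b) (w : ℝ) :
    HasDerivAt (schlomilchRoot a b) ((2 * a)⁻¹ * (1 + w / √(w ^ 2 + 4 * (a * b)))) w := by
  have hpos : 0 < w ^ 2 + 4 * (a * b) := by positivity
  have h := ((hasDerivAt_id w).add
    (((hasDerivAt_pow 2 w).add_const (4 * (a * b))).sqrt hpos.ne')).div_const (2 * a)
  refine h.congr_deriv ?_
  have := (Real.sqrt_pos.2 hpos).ne'
  push_cast
  field_simp

/-- The Cauchy–Schlömilch formula. In the variable `w = a * x - b / x` the Jacobian is a constant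
plus an odd function, and the odd part integrates to zero against `f`. -/
theorem integral_Ioi_comp_mul_sub_div (ha : 0 < a) (hb : 0 < b) {f : ℝ → E} (hf : Integrable f)
    (hf_even : f.Even) :
    ∫ x in Ioi (0 : ℝ), f (a * x - b / x) = (2 * a)⁻¹ • ∫ w, f w := by
  set r : ℝ → ℝ := fun w => w / √(w ^ 2 + 4 * (a * b)) with hr
  have hr_lt (w : ℝ) : |r w| < 1 := by
    rw [hr, abs_div, abs_of_nonneg (Real.sqrt_nonneg _)]
    have h : |w| < √(w ^ 2 + 4 * (a * b)) := abs_lt_sqrt_sq_add (by positivity)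
    exact (div_lt_one ((abs_nonneg w).trans_lt h)).2 h
  have hr_meas : AEStronglyMeasurable r := by
    have : Measurable r := by fun_prop
    exact this.aestronglyMeasurable
  have hrf : Integrable fun w => r w • f w :=
    hf.bdd_smul 1 hr_meas (.of_forall fun w => (hr_lt w).le)
  have hrf_odd : Function.Odd fun w => r w • f w := fun w => by
    simp [hr, hf_even w, neg_div]
  have hinj : InjOn (schlomilchRoot a b) univ :=
    (Function.LeftInverse.injective (g := fun x => a * x - b / x)
      (mul_schlomilchRoot_sub_div ha hb)).injOn
  calc ∫ x in Ioi (0 : ℝ), f (a * x - b / x)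
      = ∫ w, |(2 * a)⁻¹ * (1 + r w)| • f w := by
        rw [← image_schlomilchRoot_univ ha hb, integral_image_eq_integral_abs_deriv_smul
          MeasurableSet.univ (fun w _ => (hasDerivAt_schlomilchRoot ha hb w).hasDerivWithinAt) hinj,
          setIntegral_univ]
        simp only [mul_schlomilchRoot_sub_div ha hb, hr]
    _ = (2 * a)⁻¹ • ∫ w, (f w + r w • f w) := by
        rw [← integral_smul]
        congr with w
        have : 0 ≤ 1 + r w := by linarith [neg_abs_le (r w), hr_lt w]
        rw [abs_of_nonneg (by positivity), mul_smul, add_smul, one_smul]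
    _ = (2 * a)⁻¹ • ∫ w, f w := by
        rw [integral_add hf hrf, integral_eq_zero_of_odd hrf_odd, add_zero]

theorem integral_Ioi_inv_sq_mul_exp_neg_div_sub_mul (ha : 0 < a) (hb : 0 < b) :
    ∫ c in Ioi (0 : ℝ), (c ^ 2)⁻¹ * Real.exp (-(a / c) ^ 2 - (b * c) ^ 2) =
      √π / (2 * a) * Real.exp (-(2 * a * b)) := by
  calc ∫ c in Ioi (0 : ℝ), (c ^ 2)⁻¹ * Real.exp (-(a / c) ^ 2 - (b * c) ^ 2)
      = ∫ x in Ioi (0 : ℝ), Real.exp (-(a * x) ^ 2 - (b / x) ^ 2) := by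
        rw [← integral_Ioi_inv_sq_smul_comp_inv fun x => Real.exp (-(a * x) ^ 2 - (b / x) ^ 2)]
        simp only [smul_eq_mul, div_eq_mul_inv, inv_inv]
    _ = ∫ x in Ioi (0 : ℝ), Real.exp (-1 * (a * x - b / x) ^ 2) * Real.exp (-(2 * a * b)) := by
        refine setIntegral_congr_fun measurableSet_Ioi fun x (hx : 0 < x) => ?_
        simp only [← Real.exp_add]
        congr 1
        field_simp
        ring
    _ = √π / (2 * a) * Real.exp (-(2 * a * b)) := by
        rw [integral_mul_const, integral_Ioi_comp_mul_sub_div ha hb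
          (f := fun w => Real.exp (-1 * w ^ 2)) (integrable_exp_neg_mul_sq one_pos)
          (fun w => by simp), integral_gaussian, div_one, smul_eq_mul, inv_mul_eq_div]

end OneVariable

section Yukawa

variable {ι : Type*} [Fintype ι]

/-- The integrand at `v` of the bilateral Laplace transform, at the complex frequency `l`, of the
Yukawa kernel `e ^ (-a |v|) / |v|`; at the origin it has the junk value `0`. -/
noncomputable def yukawaIntegrand (a : ℝ) (l : ι → ℂ) (v : ι → ℝ) : ℂ :=
  Complex.exp (-a * √(∑ i, v i ^ 2) + ∑ i, l i * v i) / √(∑ i, v i ^ 2)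

/-- The Gaussian in `v` of scale `c`, tilted by the complex frequency `l` and weighted so that
mixing over `c > 0` produces `yukawaIntegrand a l v` up to a constant. -/
noncomputable def gaussianMixand (a : ℝ) (l : ι → ℂ) (v : ι → ℝ) (c : ℝ) : ℂ :=
  (c ^ 2 : ℂ)⁻¹ * Complex.exp (-(a ^ 2 / 4) * c ^ 2) *
    Complex.exp (-(c ^ 2 : ℂ)⁻¹ * ∑ i, (v i : ℂ) ^ 2 + ∑ i, l i * v i)

variable {a : ℝ} {l : ι → ℂ}

theorem measurable_gaussianMixand (a : ℝ) (l : ι → ℂ) :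
    Measurable fun z : (ι → ℝ) × ℝ => gaussianMixand a l z.1 z.2 := by
  unfold gaussianMixand
  fun_prop

theorem ofReal_norm_gaussianMixand (a : ℝ) (l : ι → ℂ) (v : ι → ℝ) (c : ℝ) :
    (‖gaussianMixand a l v c‖ : ℂ) = gaussianMixand a (fun i => ((l i).re : ℂ)) v c := by
  simp only [gaussianMixand, norm_mul, norm_inv, norm_pow, Complex.norm_real, Complex.norm_exp,
    Real.norm_eq_abs, sq_abs, Complex.add_re, Complex.re_sum, Complex.re_mul_ofReal]
  norm_cast

theorem inv_sq_re_pos {c : ℝ} (hc : c ≠ 0) : 0 < ((c ^ 2 : ℂ)⁻¹).re := by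
  norm_cast
  positivity

theorem integrable_gaussianMixand (a : ℝ) (l : ι → ℂ) {c : ℝ} (hc : c ≠ 0) :
    Integrable fun v => gaussianMixand a l v c :=
  (GaussianFourier.integrable_cexp_neg_mul_sum_add (inv_sq_re_pos hc) l).const_mul _

theorem integral_Ioi_gaussianMixand (ha : 0 < a) (l : ι → ℂ) {v : ι → ℝ} (hv : v ≠ 0) :
    ∫ c in Ioi (0 : ℝ), gaussianMixand a l v c = (√π / 2 : ℝ) * yukawaIntegrand a l v := by
  have hv' : 0 < ∑ i, v i ^ 2 := by
    obtain ⟨i, hi⟩ := Function.ne_iff.1 hv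
    exact Finset.sum_pos' (fun j _ => sq_nonneg (v j))
      ⟨i, Finset.mem_univ i, sq_pos_of_ne_zero hi⟩
  have hsplit (c : ℝ) : gaussianMixand a l v c =
      ((c ^ 2)⁻¹ * Real.exp (-(√(∑ i, v i ^ 2) / c) ^ 2 - (a / 2 * c) ^ 2) : ℝ) *
        Complex.exp (∑ i, l i * v i) := by
    rw [gaussianMixand, div_pow, Real.sq_sqrt hv'.le]
    push_cast
    rw [mul_assoc, mul_assoc, ← Complex.exp_add, ← Complex.exp_add]
    ring_nf
  simp only [hsplit]
  rw [integral_mul_const, integral_complex_ofReal,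
    integral_Ioi_inv_sq_mul_exp_neg_div_sub_mul (Real.sqrt_pos.2 hv') (half_pos ha),
    yukawaIntegrand, Complex.exp_add]
  push_cast
  ring_nf

theorem ae_integral_Ioi_gaussianMixand [Nonempty ι] (ha : 0 < a) (l : ι → ℂ) :
    (fun v => ∫ c in Ioi (0 : ℝ), gaussianMixand a l v c) =ᵐ[volume]
      fun v => (√π / 2 : ℝ) * yukawaIntegrand a l v :=
  (Measure.ae_ne volume 0).mono fun _ hv => integral_Ioi_gaussianMixand ha l hv

theorem re_sq_sub_sum_sq_pos (h : ∑ i, (l i).re ^ 2 < a ^ 2) :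
    0 < ((a : ℂ) ^ 2 - ∑ i, l i ^ 2).re := by
  have hle : ∑ i, ((l i) ^ 2).re ≤ ∑ i, (l i).re ^ 2 := Finset.sum_le_sum fun i _ => by
    rw [sq, Complex.mul_re, ← sq, ← sq]
    exact sub_le_self _ (sq_nonneg _)
  rw [Complex.sub_re, Complex.re_sum, ← Complex.ofReal_pow, Complex.ofReal_re]
  linarith

theorem integral_gaussianMixand (a : ℝ) (l : Fin 2 → ℂ) {c : ℝ} (hc : c ≠ 0) :
    ∫ v, gaussianMixand a l v c =
      π * Complex.exp (-((a ^ 2 - ∑ i, l i ^ 2) / 4) * c ^ 2) := by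
  have hc' : (c : ℂ) ≠ 0 := Complex.ofReal_ne_zero.2 hc
  have hexp : Complex.exp (-((a ^ 2 - ∑ i, l i ^ 2) / 4) * c ^ 2) =
      Complex.exp (-(a ^ 2 / 4) * c ^ 2) *
        Complex.exp ((∑ i, l i ^ 2) / (4 * (c ^ 2 : ℂ)⁻¹)) := by
    rw [← Complex.exp_add]
    congr 1
    field_simp
    ring
  simp only [gaussianMixand]
  rw [integral_const_mul, GaussianFourier.integral_cexp_neg_mul_sum_add (inv_sq_re_pos hc), hexp,
    Fintype.card_fin, Nat.cast_ofNat, div_self two_ne_zero, Complex.cpow_one]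
  field_simp

theorem integral_norm_gaussianMixand (a : ℝ) (l : Fin 2 → ℂ) {c : ℝ} (hc : c ≠ 0) :
    ∫ v, ‖gaussianMixand a l v c‖ =
      π * Real.exp (-((a ^ 2 - ∑ i, (l i).re ^ 2) / 4) * c ^ 2) := by
  apply Complex.ofReal_injective
  rw [← integral_complex_ofReal]
  simp only [ofReal_norm_gaussianMixand, integral_gaussianMixand a _ hc]
  push_cast
  rfl

theorem integrable_gaussianMixand_prod {l : Fin 2 → ℂ} (h : ∑ i, (l i).re ^ 2 < a ^ 2) :
    Integrable (fun z : (Fin 2 → ℝ) × ℝ => gaussianMixand a l z.1 z.2)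
      (volume.prod (volume.restrict (Ioi 0))) := by
  rw [integrable_prod_iff' (measurable_gaussianMixand a l).aestronglyMeasurable]
  refine ⟨(ae_restrict_iff' measurableSet_Ioi).2 (.of_forall fun c hc =>
    integrable_gaussianMixand a l (ne_of_gt hc)), ?_⟩
  have hgauss : Integrable fun c : ℝ =>
      π * Real.exp (-((a ^ 2 - ∑ i, (l i).re ^ 2) / 4) * c ^ 2) :=
    (integrable_exp_neg_mul_sq (by linarith)).const_mul _
  exact hgauss.integrableOn.congr_fun
    (fun c hc => (integral_norm_gaussianMixand a l (ne_of_gt hc)).symm) measurableSet_Ioi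

theorem integrable_yukawaIntegrand {l : Fin 2 → ℂ} (ha : 0 < a) (h : ∑ i, (l i).re ^ 2 < a ^ 2) :
    Integrable (yukawaIntegrand a l) := by
  have hunit : IsUnit ((√π / 2 : ℝ) : ℂ) := by
    rw [isUnit_iff_ne_zero, Complex.ofReal_ne_zero]
    positivity
  rw [← integrable_const_mul_iff hunit]
  exact (integrable_gaussianMixand_prod h).integral_prod_left.congr
    (ae_integral_Ioi_gaussianMixand ha l)

theorem integral_yukawaIntegrand {l : Fin 2 → ℂ} (ha : 0 < a) (h : ∑ i, (l i).re ^ 2 < a ^ 2) :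
    ∫ v, yukawaIntegrand a l v = 2 * π * ((a : ℂ) ^ 2 - ∑ i, l i ^ 2) ^ (-(1 : ℂ) / 2) := by
  have hre := re_sq_sub_sum_sq_pos h
  have hre4 : 0 < (((a : ℂ) ^ 2 - ∑ i, l i ^ 2) / 4).re := by
    rw [Complex.div_ofNat_re]
    positivity
  have hsqrt : (√π : ℂ) ≠ 0 := Complex.ofReal_ne_zero.2 (Real.sqrt_pos.2 Real.pi_pos).ne'
  have hmix : (√π / 2 : ℝ) * ∫ v, yukawaIntegrand a l v =
      π * (√π * ((a : ℂ) ^ 2 - ∑ i, l i ^ 2) ^ (-(1 : ℂ) / 2)) :=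
    calc (√π / 2 : ℝ) * ∫ v, yukawaIntegrand a l v
        = ∫ v, ∫ c in Ioi (0 : ℝ), gaussianMixand a l v c := by
          rw [← integral_const_mul, integral_congr_ae (ae_integral_Ioi_gaussianMixand ha l)]
      _ = ∫ c in Ioi (0 : ℝ), ∫ v, gaussianMixand a l v c :=
          integral_integral_swap (integrable_gaussianMixand_prod h)
      _ = ∫ c in Ioi (0 : ℝ), π * Complex.exp (-((a ^ 2 - ∑ i, l i ^ 2) / 4) * c ^ 2) :=
          setIntegral_congr_fun measurableSet_Ioi fun c hc =>
            integral_gaussianMixand a l (ne_of_gt hc)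
      _ = π * (√π * ((a : ℂ) ^ 2 - ∑ i, l i ^ 2) ^ (-(1 : ℂ) / 2)) := by
          rw [integral_const_mul, integral_gaussian_complex_Ioi hre4,
            pi_div_quarter_cpow_one_half hre]
          ring
  push_cast at hmix
  refine mul_left_cancel₀ hsqrt ?_
  linear_combination 2 * hmix

end Yukawa

section LinearChangeOfVariables

variable {E F : Type*} [NormedAddCommGroup E] [NormedSpace ℝ E] [FiniteDimensional ℝ E]
  [MeasurableSpace E] [BorelSpace E] [NormedAddCommGroup F]

theorem measurableEmbedding_of_linearMap_det_ne_zero {T : E →ₗ[ℝ] E} (hT : LinearMap.det T ≠ 0) :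
    MeasurableEmbedding T :=
  (T.equivOfDetNeZero hT).toContinuousLinearEquiv.toHomeomorph.measurableEmbedding

theorem integrable_comp_linearMap_iff (μ : Measure E) [μ.IsAddHaarMeasure] {T : E →ₗ[ℝ] E}
    (hT : LinearMap.det T ≠ 0) {f : E → F} :
    Integrable (fun x => f (T x)) μ ↔ Integrable f μ := by
  have hdet : 0 < |(LinearMap.det T)⁻¹| := abs_pos.2 (inv_ne_zero hT)
  rw [← integrable_smul_measure (f := f) (ENNReal.ofReal_pos.2 hdet).ne' ENNReal.ofReal_ne_top,
    ← Measure.map_linearMap_addHaar_eq_smul_addHaar μ hT,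
    (measurableEmbedding_of_linearMap_det_ne_zero hT).integrable_map_iff, Function.comp_def]

theorem integral_comp_linearMap [NormedSpace ℝ F] (μ : Measure E) [μ.IsAddHaarMeasure]
    {T : E →ₗ[ℝ] E} (hT : LinearMap.det T ≠ 0) (f : E → F) :
    ∫ x, f (T x) ∂μ = |LinearMap.det T|⁻¹ • ∫ x, f x ∂μ := by
  rw [← (measurableEmbedding_of_linearMap_det_ne_zero hT).integral_map,
    Measure.map_linearMap_addHaar_eq_smul_addHaar μ hT, integral_smul_measure,
    ENNReal.toReal_ofReal (abs_nonneg _), abs_inv]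

theorem integrable_comp_mulVec_iff {M : Matrix (Fin 2) (Fin 2) ℝ} (hM : M.det ≠ 0)
    {f : (Fin 2 → ℝ) → F} :
    Integrable (fun p : ℝ × ℝ => f (M.mulVec ![p.1, p.2])) ↔ Integrable f := by
  rw [← LinearMap.det_toLin'] at hM
  rw [← integrable_comp_linearMap_iff volume hM]
  exact (volume_preserving_finTwoArrow ℝ).symm.integrable_comp_emb
    MeasurableEquiv.finTwoArrow.symm.measurableEmbedding (g := fun x => f (Matrix.toLin' M x))

theorem integral_comp_mulVec [NormedSpace ℝ F] {M : Matrix (Fin 2) (Fin 2) ℝ} (hM : M.det ≠ 0)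
    (f : (Fin 2 → ℝ) → F) :
    ∫ p : ℝ × ℝ, f (M.mulVec ![p.1, p.2]) = |M.det|⁻¹ • ∫ x, f x := by
  rw [← LinearMap.det_toLin'] at hM ⊢
  rw [← integral_comp_linearMap volume hM]
  exact (volume_preserving_finTwoArrow ℝ).symm.integral_comp' fun x => f (Matrix.toLin' M x)

end LinearChangeOfVariables

section JointDensity

/-- A linear map carrying the quadratic form `Qform ρ σ` to the squared Euclidean norm. Its rows are
multiples of `x + y` and `x - y`, which diagonalize `Qform`. -/
noncomputable def decorrelation (ρ σ : ℝ) : Matrix (Fin 2) (Fin 2) ℝ :=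
  !![√((1 - σ) / 2), √((1 - σ) / 2);
    √((1 - 2 * ρ ^ 2 + σ) / 2), -√((1 - 2 * ρ ^ 2 + σ) / 2)]

/-- The exponential decay rate `√η / ξ` of `jointDensity` with respect to `√Q`. -/
noncomputable def decayRate (ρ σ : ℝ) : ℝ :=
  √((1 + σ) / (1 - σ)) / (1 - 2 * ρ ^ 2 + σ)

/-- The exponent `(ρ x + ρ y) / ξ + i (u x + v y)` as a linear form in the coordinates given by
`decorrelation ρ σ`. -/
noncomputable def frequency (ρ σ u v : ℝ) : Fin 2 → ℂ :=
  ![⟨ρ / (1 - 2 * ρ ^ 2 + σ) / √((1 - σ) / 2), (u + v) / 2 / √((1 - σ) / 2)⟩,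
    ⟨0, (u - v) / 2 / √((1 - 2 * ρ ^ 2 + σ) / 2)⟩]

variable {ρ σ : ℝ}

theorem det_decorrelation (hσ : 0 ≤ 1 - σ) :
    (decorrelation ρ σ).det = -√((1 - σ) * (1 - 2 * ρ ^ 2 + σ)) := by
  have hquarter : (1 - σ) * (1 - 2 * ρ ^ 2 + σ) =
      2 ^ 2 * ((1 - σ) / 2 * ((1 - 2 * ρ ^ 2 + σ) / 2)) := by ring
  rw [hquarter, Real.sqrt_mul (sq_nonneg 2), Real.sqrt_sq zero_le_two,
    Real.sqrt_mul (by linarith), decorrelation, Matrix.det_fin_two_of]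
  ring

theorem sum_sq_decorrelation_mulVec (hσ : 0 ≤ 1 - σ) (hξ : 0 ≤ 1 - 2 * ρ ^ 2 + σ) (x y : ℝ) :
    ∑ i, (decorrelation ρ σ).mulVec ![x, y] i ^ 2 = Qform ρ σ x y := by
  have hα : √((1 - σ) / 2) ^ 2 = (1 - σ) / 2 := Real.sq_sqrt (by linarith)
  have hβ : √((1 - 2 * ρ ^ 2 + σ) / 2) ^ 2 = (1 - 2 * ρ ^ 2 + σ) / 2 := Real.sq_sqrt (by linarith)
  simp only [decorrelation, Qform, Fin.sum_univ_two, Matrix.mulVec, dotProduct, Matrix.of_apply,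
    Matrix.cons_val_zero, Matrix.cons_val_one]
  linear_combination (x + y) ^ 2 * hα + (x - y) ^ 2 * hβ

theorem sum_frequency_mul_decorrelation_mulVec (hσ : 0 < 1 - σ) (hξ : 0 < 1 - 2 * ρ ^ 2 + σ)
    (u v x y : ℝ) :
    ∑ i, frequency ρ σ u v i * (decorrelation ρ σ).mulVec ![x, y] i =
      (ρ * x + ρ * y) / (1 - 2 * ρ ^ 2 + σ) + Complex.I * (u * x + v * y) := by
  have hα : (√((1 - σ) / 2) : ℂ) ≠ 0 :=
    Complex.ofReal_ne_zero.2 (Real.sqrt_pos.2 (half_pos hσ)).ne'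
  have hβ : (√((1 - 2 * ρ ^ 2 + σ) / 2) : ℂ) ≠ 0 :=
    Complex.ofReal_ne_zero.2 (Real.sqrt_pos.2 (half_pos hξ)).ne'
  simp only [frequency, decorrelation, Fin.sum_univ_two, Matrix.mulVec, dotProduct,
    Matrix.of_apply, Matrix.cons_val_zero, Matrix.cons_val_one, Complex.mk_eq_add_mul_I]
  push_cast
  field_simp
  ring

theorem decayRate_pos (hσ : 0 < 1 - σ) (hσ' : 0 < 1 + σ) (hξ : 0 < 1 - 2 * ρ ^ 2 + σ) :
    0 < decayRate ρ σ :=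
  div_pos (Real.sqrt_pos.2 (div_pos hσ' hσ)) hξ

theorem decayRate_sq (hσ : 0 ≤ (1 + σ) / (1 - σ)) :
    decayRate ρ σ ^ 2 = (1 + σ) / (1 - σ) / (1 - 2 * ρ ^ 2 + σ) ^ 2 := by
  rw [decayRate, div_pow, Real.sq_sqrt hσ]

theorem sum_re_frequency_sq (hσ : 0 ≤ 1 - σ) (u v : ℝ) :
    ∑ i, (frequency ρ σ u v i).re ^ 2 = 2 * ρ ^ 2 / (1 - σ) / (1 - 2 * ρ ^ 2 + σ) ^ 2 := by
  simp only [frequency, Fin.sum_univ_two, Matrix.cons_val_zero, Matrix.cons_val_one]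
  rw [div_pow, Real.sq_sqrt (by linarith)]
  field_simp
  ring

theorem sum_re_frequency_sq_lt (hσ : 0 < 1 - σ) (hσ' : 0 < 1 + σ) (hξ : 0 < 1 - 2 * ρ ^ 2 + σ)
    (u v : ℝ) :
    ∑ i, (frequency ρ σ u v i).re ^ 2 < decayRate ρ σ ^ 2 := by
  rw [sum_re_frequency_sq hσ.le, decayRate_sq (by positivity)]
  gcongr
  linarith

theorem jointDensity_mul_cexp (hσ : 0 < 1 - σ) (hξ : 0 < 1 - 2 * ρ ^ 2 + σ) (u v : ℝ) (p : ℝ × ℝ) :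
    jointDensity ρ σ p.1 p.2 * Complex.exp (Complex.I * (u * p.1 + v * p.2)) =
      (1 / (2 * π) : ℂ) * yukawaIntegrand (decayRate ρ σ) (frequency ρ σ u v)
          ((decorrelation ρ σ).mulVec ![p.1, p.2]) := by
  rw [yukawaIntegrand, sum_sq_decorrelation_mulVec hσ.le hξ.le,
    sum_frequency_mul_decorrelation_mulVec hσ hξ, jointDensity, decayRate]
  have hexp (a r ξ s t : ℂ) : -(a / ξ) * r + (s / ξ + t) = (s - a * r) / ξ + t := by ring
  push_cast
  rw [hexp, Complex.exp_add]
  ring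

theorem sum_frequency_sq (hσ : 0 ≤ 1 - σ) (hξ : 0 ≤ 1 - 2 * ρ ^ 2 + σ) (u v : ℝ) :
    ∑ i, frequency ρ σ u v i ^ 2 =
      (ρ / (1 - 2 * ρ ^ 2 + σ) + (u + v) / 2 * Complex.I) ^ 2 / ((1 - σ) / 2) -
        ((u - v) / 2) ^ 2 / ((1 - 2 * ρ ^ 2 + σ) / 2) := by
  have hα : (√((1 - σ) / 2) : ℂ) ^ 2 = (1 - σ) / 2 := by
    rw [← Complex.ofReal_pow, Real.sq_sqrt (by linarith)]
    push_cast
    rfl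
  have hβ : (√((1 - 2 * ρ ^ 2 + σ) / 2) : ℂ) ^ 2 = (1 - 2 * ρ ^ 2 + σ) / 2 := by
    rw [← Complex.ofReal_pow, Real.sq_sqrt (by linarith)]
    push_cast
    rfl
  rw [← hα, ← hβ]
  simp only [frequency, Fin.sum_univ_two, Matrix.cons_val_zero, Matrix.cons_val_one,
    Complex.mk_eq_add_mul_I]
  push_cast
  linear_combination (((u - v) / 2) ^ 2 / √((1 - 2 * ρ ^ 2 + σ) / 2) ^ 2 : ℂ) * Complex.I_sq

theorem mul_decayRate_sq_sub_sum_frequency_sq (hσ : 0 < 1 - σ)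
    (hσ' : 0 < 1 + σ) (hξ : 0 < 1 - 2 * ρ ^ 2 + σ) (u v : ℝ) :
    (((1 - σ) * (1 - 2 * ρ ^ 2 + σ) : ℝ) : ℂ) *
        ((decayRate ρ σ : ℂ) ^ 2 - ∑ i, frequency ρ σ u v i ^ 2) =
      1 + (1 - (ρ : ℂ) ^ 2) * u ^ 2 - 2 * Complex.I * ρ * u +
        (1 - (ρ : ℂ) ^ 2) * v ^ 2 - 2 * Complex.I * ρ * v +
        2 * ((σ : ℂ) - (ρ : ℂ) ^ 2) * u * v := by
  have hσ₀ : (1 - σ : ℂ) ≠ 0 := by exact_mod_cast hσ.ne'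
  have hξ₀ : (1 - 2 * ρ ^ 2 + σ : ℂ) ≠ 0 := by exact_mod_cast hξ.ne'
  rw [← Complex.ofReal_pow, decayRate_sq (by positivity), sum_frequency_sq hσ.le hξ.le]
  push_cast
  field_simp
  linear_combination -((u + v) ^ 2 * (1 - 2 * ρ ^ 2 + σ) ^ 2 : ℂ) * Complex.I_sq

end JointDensity

theorem density_cf_fourier_pair (ρ σ : ℝ) (h1 : 1 - σ ^ 2 > 0) (h2 : 1 - 2 * ρ ^ 2 + σ > 0) :
    ∀ u v : ℝ,
      Integrable (fun p : ℝ × ℝ =>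
        (jointDensity ρ σ p.1 p.2 : ℂ) * Complex.exp (Complex.I * (u * p.1 + v * p.2))) ∧
      (∫ p : ℝ × ℝ,
        (jointDensity ρ σ p.1 p.2 : ℂ) * Complex.exp (Complex.I * (u * p.1 + v * p.2))) =
      (1 + (1 - (ρ : ℂ) ^ 2) * u ^ 2 - 2 * Complex.I * ρ * u +
        (1 - (ρ : ℂ) ^ 2) * v ^ 2 - 2 * Complex.I * ρ * v +
        2 * ((σ : ℂ) - (ρ : ℂ) ^ 2) * u * v) ^ (-(1 : ℂ) / 2) := by
  intro u v
  obtain ⟨hσ', hσ⟩ : 0 < 1 + σ ∧ 0 < 1 - σ := by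
    obtain ⟨hlt, hgt⟩ := abs_lt.1 ((sq_lt_one_iff_abs_lt_one σ).1 (sub_pos.1 h1))
    exact ⟨by linarith, sub_pos.2 hgt⟩
  have hprod : 0 < (1 - σ) * (1 - 2 * ρ ^ 2 + σ) := mul_pos hσ h2
  have hdet : (decorrelation ρ σ).det ≠ 0 := by
    rw [det_decorrelation hσ.le]
    exact neg_ne_zero.2 (Real.sqrt_pos.2 hprod).ne'
  have hrate := decayRate_pos hσ hσ' h2
  have hre := sum_re_frequency_sq_lt hσ hσ' h2 u v
  simp only [jointDensity_mul_cexp hσ h2]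
  refine ⟨((integrable_comp_mulVec_iff hdet).2
    (integrable_yukawaIntegrand hrate hre)).const_mul _, ?_⟩
  rw [integral_const_mul, integral_comp_mulVec hdet, integral_yukawaIntegrand hrate hre,
    ← mul_decayRate_sq_sub_sum_frequency_sq hσ hσ' h2, ofReal_mul_cpow_of_nonneg hprod.le,
    ofReal_cpow_neg_one_half hprod.le, det_decorrelation hσ.le, abs_neg,
    abs_of_nonneg (Real.sqrt_nonneg _), Complex.real_smul]
  field_simp
end

section
/- Let ρ, σ ∈ ℝ satisfy 1 − σ² > 0 and 1 − 2ρ² + σ > 0, and set ξ = 1 − 2ρ² + σ, η = (1+σ)/(1−σ), λ = 1/√(1−σ), κ = 1/√(1−2ρ²+σ), δ = 2ρ/ξ, α = √(2η)/ξ. Then for all (x,y) ∈ ℝ² with (x,y) ≠ (0,0), the iterated integral (2λ⁴κ⁴/(2π)²) ∫_ℝ ∫_ℝ exp(−i((x+y)/2)s − i((−x+y)/2)t)·[λ²(s−iδ)² + κ²t² + α²]^{−2} dt ds equals (λ²κ²/(4πα))·exp(δ(x+y)/2)·R·K₁((α/(2λκ))·R), where R = √(κ²(x+y)² + λ²(x−y)²)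 and K₁(z) = ∫₀^∞ exp(−z cosh t) cosh t dt. -/
open MeasureTheory

/-- The modified Bessel function of the second kind `K_ν(x)` for real order and argument,
defined by `K_ν(x) = ∫₀^∞ exp(-x cosh t) cosh(ν t) dt`. -/
noncomputable def besselK (ν x : ℝ) : ℝ :=
  ∫ t in Set.Ioi (0 : ℝ), Real.exp (-x * Real.cosh t) * Real.cosh (ν * t)

/-! The Euler integral `Γ(p) v ^ (-p) = ∫₀^∞ τ ^ (p - 1) exp(-v τ) dτ` holds on the whole half-plane
`Re v > 0`. Applied to the quadratic form `v = L (s - z)² + K (t - w)² + A`, whose real part stays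
positive when the imaginary parts of `z` and `w` are small against `A`, it turns the power of the
form into a mixture over `τ` of products of Gaussians in `s` and in `t`. Each Gaussian has an
elementary Fourier transform, so integrating out `t` and then `s` (exchanging each time with the
`τ`-integral) leaves `∫₀^∞ τ ^ (p - 2) exp(-(A τ + r² / (4 τ))) dτ`, and `τ = r exp u / (2 √A)`
turns this into the integral defining `K_{p - 1}(√A r)`. The density is the case `p = 2`. -/

section Bessel

theorem one_add_sq_div_two_le_cosh (u : ℝ) : 1 + u ^ 2 / 2 ≤ Real.cosh u := by
  have hsinh : |u / 2| ≤ Real.sinh |u / 2| := Real.self_le_sinh_iff.2 (abs_nonneg _)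
  have hsq : (u / 2) ^ 2 ≤ Real.sinh (u / 2) ^ 2 := by
    rw [sq_le_sq, Real.abs_sinh]
    exact hsinh
  have hcosh : Real.cosh u = 1 + 2 * Real.sinh (u / 2) ^ 2 := by
    rw [← mul_div_cancel₀ u two_ne_zero, Real.cosh_two_mul, Real.cosh_sq]
    ring_nf
  linarith

theorem integrable_exp_neg_mul_cosh_mul_exp {x : ℝ} (hx : 0 < x) (ν : ℝ) :
    Integrable fun u : ℝ ↦ Real.exp (-x * Real.cosh u) * Real.exp (ν * u) := by
  have hgauss : Integrable fun u : ℝ ↦ Real.exp (-(x / 2) * u ^ 2 + ν * u + -x) := by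
    have h := (integrable_cexp_quadratic' (b := ((-(x / 2) : ℝ) : ℂ))
      (by simpa using hx) ν (-x : ℝ)).norm
    refine h.congr (.of_forall fun u ↦ ?_)
    dsimp only
    rw [Complex.norm_exp]
    norm_cast
  refine hgauss.mono' (by fun_prop) (.of_forall fun u ↦ ?_)
  rw [← Real.exp_add, Real.norm_of_nonneg (Real.exp_pos _).le, Real.exp_le_exp]
  nlinarith [one_add_sq_div_two_le_cosh u]

theorem integral_exp_neg_mul_cosh_mul_exp {x : ℝ} (hx : 0 < x) (ν : ℝ) :
    ∫ u : ℝ, Real.exp (-x * Real.cosh u) * Real.exp (ν * u) = 2 * besselK ν x := by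
  set f : ℝ → ℝ := fun u ↦ Real.exp (-x * Real.cosh u) * Real.exp (ν * u) with hf
  have hint : Integrable f := integrable_exp_neg_mul_cosh_mul_exp hx ν
  have hcosh (u : ℝ) : Real.exp (-x * Real.cosh |u|) * Real.cosh (ν * |u|) =
      (f u + f (-u)) / 2 := by
    rw [← Real.cosh_abs (ν * |u|), abs_mul, abs_abs, ← abs_mul, Real.cosh_abs, Real.cosh_abs,
      Real.cosh_eq (ν * u)]
    simp only [hf, Real.cosh_neg, mul_neg]
    ring
  calc ∫ u, f u = ∫ u, (f u + f (-u)) / 2 := by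
        rw [integral_div, integral_add hint hint.comp_neg, integral_neg_eq_self, add_self_div_two]
    _ = 2 * besselK ν x := by
        simp_rw [← hcosh]
        exact integral_comp_abs (f := fun u ↦ Real.exp (-x * Real.cosh u) * Real.cosh (ν * u))

theorem integral_Ioi_eq_integral_mul_exp_smul {E : Type*} [NormedAddCommGroup E] [NormedSpace ℝ E]
    {m : ℝ} (hm : 0 < m) (f : ℝ → E) :
    ∫ τ in Set.Ioi (0 : ℝ), f τ = ∫ u : ℝ, (m * Real.exp u) • f (m * Real.exp u) := by
  have himage : (fun u ↦ m * Real.exp u) '' Set.univ = Set.Ioi 0 := by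
    rw [Set.image_univ, Set.range_comp' (m * ·) Real.exp, Real.range_exp,
      Set.image_const_mul_Ioi_zero hm]
  have hderiv (u : ℝ) (_ : u ∈ Set.univ) :
      HasDerivWithinAt (fun u ↦ m * Real.exp u) (m * Real.exp u) Set.univ u :=
    ((Real.hasDerivAt_exp u).const_mul m).hasDerivWithinAt
  have hinj : Set.InjOn (fun u ↦ m * Real.exp u) Set.univ :=
    ((mul_right_injective₀ hm.ne').comp Real.exp_injective).injOn
  rw [← himage, integral_image_eq_integral_abs_deriv_smul .univ hderiv hinj, setIntegral_univ]
  simp only [abs_of_pos (mul_pos hm (Real.exp_pos _))]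

theorem integral_rpow_mul_exp_neg_add_div {α r : ℝ} (hα : 0 < α) (hr : 0 < r) (ν : ℝ) :
    ∫ τ in Set.Ioi (0 : ℝ), τ ^ (ν - 1) * Real.exp (-(α ^ 2 * τ + r ^ 2 / (4 * τ))) =
      2 * (r / (2 * α)) ^ ν * besselK ν (α * r) := by
  set m := r / (2 * α) with hm
  have hm0 : 0 < m := by positivity
  have hsubst (u : ℝ) : (m * Real.exp u) * ((m * Real.exp u) ^ (ν - 1) *
      Real.exp (-(α ^ 2 * (m * Real.exp u) + r ^ 2 / (4 * (m * Real.exp u))))) =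
        m ^ ν * (Real.exp (-(α * r) * Real.cosh u) * Real.exp (ν * u)) := by
    have hexponent : α ^ 2 * (m * Real.exp u) + r ^ 2 / (4 * (m * Real.exp u)) =
        α * r * Real.cosh u := by
      rw [hm, Real.cosh_eq, Real.exp_neg]
      field_simp
      ring
    have hpow : m * Real.exp u * (m * Real.exp u) ^ (ν - 1) = m ^ ν * Real.exp (ν * u) := by
      rw [mul_comm, ← Real.rpow_add_one (by positivity), sub_add_cancel,
        Real.mul_rpow hm0.le (Real.exp_pos u).le, ← Real.exp_mul, mul_comm u]
    rw [hexponent, ← mul_assoc, hpow, neg_mul]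
    ring
  rw [integral_Ioi_eq_integral_mul_exp_smul hm0]
  simp_rw [smul_eq_mul, hsubst]
  rw [integral_const_mul, integral_exp_neg_mul_cosh_mul_exp (mul_pos hα hr)]
  ring

end Bessel

section Gaussian

variable (a : ℝ) (z : ℂ)

theorem norm_cexp_neg_I_mul_mul (s : ℝ) : ‖Complex.exp (-(Complex.I * a * s))‖ = 1 := by
  simp [Complex.norm_exp]

theorem re_ofReal_mul_sub_sq (c s : ℝ) :
    (c * (s - z) ^ 2).re = c * (s - z.re) ^ 2 - c * z.im ^ 2 := by
  simp only [pow_two, Complex.mul_re, Complex.sub_re, Complex.sub_im, Complex.ofReal_re,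
    Complex.ofReal_im]
  ring

theorem norm_cexp_neg_mul_sub_sq (c s : ℝ) :
    ‖Complex.exp (-(c * (s - z) ^ 2))‖ =
      Real.exp (c * z.im ^ 2) * Real.exp (-c * (s - z.re) ^ 2) := by
  rw [Complex.norm_exp, Complex.neg_re, re_ofReal_mul_sub_sq, ← Real.exp_add]
  ring_nf

theorem integral_norm_cexp_neg_mul_sub_sq (c : ℝ) :
    ∫ s : ℝ, ‖Complex.exp (-(c * (s - z) ^ 2))‖ = Real.exp (c * z.im ^ 2) * √(Real.pi / c) := by
  simp_rw [norm_cexp_neg_mul_sub_sq]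
  rw [integral_const_mul, integral_sub_right_eq_self (fun s ↦ Real.exp (-c * s ^ 2)),
    integral_gaussian]

theorem integrable_cexp_neg_mul_sub_sq {c : ℝ} (hc : 0 < c) :
    Integrable fun s : ℝ ↦ Complex.exp (-(c * (s - z) ^ 2)) := by
  rw [← integrable_norm_iff (by fun_prop)]
  simp_rw [norm_cexp_neg_mul_sub_sq]
  exact ((integrable_exp_neg_mul_sq hc).comp_sub_right z.re).const_mul _

theorem integral_cexp_mul_cexp_neg_mul_sub_sq {c : ℝ} (hc : 0 < c) :
    ∫ s : ℝ, Complex.exp (-(Complex.I * a * s)) * Complex.exp (-(c * (s - z) ^ 2)) =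
      Complex.exp (-(Complex.I * a * z)) *
        (√(Real.pi / c) * Real.exp (-(a ^ 2 / (4 * c))) : ℝ) := by
  have hc' : (c : ℂ) ≠ 0 := mod_cast hc.ne'
  have hsquare (s : ℝ) : -(Complex.I * a * s) + -(c * (s - z) ^ 2) =
      -(c : ℂ) * s ^ 2 + (2 * c * z - Complex.I * a) * s + -(c * z ^ 2) := by ring
  simp_rw [← Complex.exp_add, hsquare]
  rw [integral_cexp_quadratic (by simpa using hc), neg_neg, Complex.ofReal_mul, Real.sqrt_eq_rpow,
    Complex.ofReal_cpow (by positivity), mul_left_comm, Complex.ofReal_exp, ← Complex.exp_add]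
  push_cast
  congr 2
  field_simp
  linear_combination (a : ℂ) ^ 2 * Complex.I_sq

variable {g : ℝ → ℂ} {M : ℝ}

theorem aestronglyMeasurable_of_integrableOn_mul
    (hg : IntegrableOn (fun τ ↦ (Real.exp (M * z.im ^ 2 * τ) / √τ : ℝ) * g τ) (Set.Ioi 0)) :
    AEStronglyMeasurable g (volume.restrict (Set.Ioi 0)) := by
  have hinv : AEStronglyMeasurable (fun τ ↦ ((Real.exp (M * z.im ^ 2 * τ) / √τ : ℝ) : ℂ)⁻¹)
    (volume.restrict (Set.Ioi 0)) :=
    Measurable.aestronglyMeasurable (by fun_prop)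
  refine (hinv.mul hg.aestronglyMeasurable).congr ?_
  filter_upwards [ae_restrict_mem measurableSet_Ioi] with τ (hτ : 0 < τ)
  have : ((Real.exp (M * z.im ^ 2 * τ) / √τ : ℝ) : ℂ) ≠ 0 := mod_cast (by positivity)
  exact inv_mul_cancel_left₀ this (g τ)

theorem integrable_cexp_mul_gaussian_mixture (hM : 0 < M)
    (hg : IntegrableOn (fun τ ↦ (Real.exp (M * z.im ^ 2 * τ) / √τ : ℝ) * g τ) (Set.Ioi 0)) :
    Integrable (fun q : ℝ × ℝ ↦ Complex.exp (-(Complex.I * a * q.1)) *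
        (g q.2 * Complex.exp (-((M * q.2 : ℝ) * (q.1 - z) ^ 2))))
      (volume.prod (volume.restrict (Set.Ioi 0))) := by
  have hgm := (aestronglyMeasurable_of_integrableOn_mul z hg).comp_snd (μ := volume (α := ℝ))
  have hmeas : AEStronglyMeasurable (fun q : ℝ × ℝ ↦ Complex.exp (-(Complex.I * a * q.1)) *
      (g q.2 * Complex.exp (-((M * q.2 : ℝ) * (q.1 - z) ^ 2))))
      (volume.prod (volume.restrict (Set.Ioi 0))) :=
    (Continuous.aestronglyMeasurable (by fun_prop)).mul
      (hgm.mul (Continuous.aestronglyMeasurable (by fun_prop)))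
  rw [integrable_prod_iff' hmeas]
  constructor
  · filter_upwards [ae_restrict_mem measurableSet_Ioi] with τ (hτ : 0 < τ)
    rw [← integrable_norm_iff (by fun_prop)]
    simp_rw [norm_mul, norm_cexp_neg_I_mul_mul, one_mul]
    exact (integrable_cexp_neg_mul_sub_sq z (mul_pos hM hτ)).norm.const_mul _
  · refine (hg.norm.const_mul √(Real.pi / M)).congr ?_
    filter_upwards [ae_restrict_mem measurableSet_Ioi] with τ (hτ : 0 < τ)
    simp_rw [norm_mul, norm_cexp_neg_I_mul_mul, one_mul]
    rw [integral_const_mul, integral_norm_cexp_neg_mul_sub_sq, Complex.norm_real,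
      Real.norm_of_nonneg (by positivity), ← div_div, Real.sqrt_div' _ hτ.le]
    ring_nf

theorem integral_cexp_mul_gaussian_mixture (hM : 0 < M)
    (hg : IntegrableOn (fun τ ↦ (Real.exp (M * z.im ^ 2 * τ) / √τ : ℝ) * g τ) (Set.Ioi 0)) :
    ∫ s : ℝ, Complex.exp (-(Complex.I * a * s)) *
        ∫ τ in Set.Ioi (0 : ℝ), g τ * Complex.exp (-((M * τ : ℝ) * (s - z) ^ 2)) =
      √(Real.pi / M) * Complex.exp (-(Complex.I * a * z)) *
        ∫ τ in Set.Ioi (0 : ℝ), (Real.exp (-(a ^ 2 / M / (4 * τ))) / √τ : ℝ) * g τ := by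
  simp_rw [← integral_const_mul]
  rw [integral_integral_swap (integrable_cexp_mul_gaussian_mixture a z hM hg)]
  refine setIntegral_congr_fun measurableSet_Ioi fun τ (hτ : 0 < τ) ↦ ?_
  simp_rw [mul_left_comm _ (g τ)]
  rw [integral_const_mul, integral_cexp_mul_cexp_neg_mul_sub_sq a z (mul_pos hM hτ),
    ← div_div Real.pi, Real.sqrt_div' _ hτ.le]
  have : a ^ 2 / (4 * (M * τ)) = a ^ 2 / M / (4 * τ) := by field_simp
  rw [this]
  push_cast
  ring

end Gaussian

section Laplace

variable {p : ℝ}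

theorem integrableOn_rpow_mul_exp_neg_mul {q c : ℝ} (hq : -1 < q) (hc : 0 < c) :
    IntegrableOn (fun τ : ℝ ↦ τ ^ q * Real.exp (-(c * τ))) (Set.Ioi 0) := by
  simpa using integrableOn_rpow_mul_exp_neg_mul_rpow hq one_pos hc

theorem differentiableOn_integral_rpow_mul_cexp_neg_mul (hp : 0 < p) :
    DifferentiableOn ℂ
      (fun w : ℂ ↦ ∫ τ in Set.Ioi (0 : ℝ), ((τ ^ (p - 1) : ℝ) : ℂ) * Complex.exp (-(w * τ)))
      {w | 0 < w.re} := by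
  -- The integral is the moment generating function at `-w` of the measure with density
  -- `τ ^ (p - 1)`, which is analytic where it converges.
  set μ : Measure ℝ :=
    (volume.restrict (Set.Ioi 0)).withDensity fun τ ↦ ENNReal.ofReal (τ ^ (p - 1)) with hμ
  have hpos : ∀ᵐ τ : ℝ ∂volume.restrict (Set.Ioi 0), 0 ≤ τ ^ (p - 1) := by
    filter_upwards [ae_restrict_mem measurableSet_Ioi] with τ (hτ : 0 < τ)
    positivity
  have hmgf (w : ℂ) : ∫ τ in Set.Ioi (0 : ℝ), ((τ ^ (p - 1) : ℝ) : ℂ) * Complex.exp (-(w * τ)) =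
      ProbabilityTheory.complexMGF id μ (-w) := by
    rw [ProbabilityTheory.complexMGF, hμ, integral_withDensity_eq_integral_toReal_smul₀
      (by fun_prop) (by simp)]
    refine integral_congr_ae ?_
    filter_upwards [hpos] with τ hτ
    simp [ENNReal.toReal_ofReal hτ]
  have hsubset : Set.Iio 0 ⊆ ProbabilityTheory.integrableExpSet id μ := fun x (hx : x < 0) ↦ by
    rw [ProbabilityTheory.integrableExpSet, Set.mem_ofPred, hμ,
      integrable_withDensity_iff_integrable_smul₀' (by fun_prop) (by simp)]
    refine (integrableOn_rpow_mul_exp_neg_mul (q := p - 1) (by linarith)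
      (neg_pos.2 hx)).congr ?_
    filter_upwards [hpos] with τ hτ
    simp [ENNReal.toReal_ofReal hτ]
  simp_rw [hmgf]
  refine ProbabilityTheory.differentiableOn_complexMGF.comp (by fun_prop) fun w hw ↦ ?_
  exact interior_maximal hsubset isOpen_Iio (by simpa using hw)

theorem integral_rpow_mul_cexp_neg_mul_Ioi (hp : 0 < p) {w : ℂ} (hw : 0 < w.re) :
    ∫ τ in Set.Ioi (0 : ℝ), ((τ ^ (p - 1) : ℝ) : ℂ) * Complex.exp (-(w * τ)) =
      Real.Gamma p * w ^ (-p : ℂ) := by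
  -- Both sides are holomorphic on the right half-plane and agree on the positive reals.
  have hopen : IsOpen {w : ℂ | 0 < w.re} := isOpen_lt continuous_const Complex.continuous_re
  have hconn : IsPreconnected {w : ℂ | 0 < w.re} := (convex_halfSpace_re_gt 0).isPreconnected
  have hpow : DifferentiableOn ℂ (fun w : ℂ ↦ (Real.Gamma p : ℂ) * w ^ (-p : ℂ)) {w | 0 < w.re} :=
    (differentiableOn_id.cpow_const fun w hw ↦ .inl hw).const_mul _
  have hreal : ∀ r : ℝ, 0 < r →
      ∫ τ in Set.Ioi (0 : ℝ), ((τ ^ (p - 1) : ℝ) : ℂ) * Complex.exp (-(r * τ)) =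
        Real.Gamma p * (r : ℂ) ^ (-p : ℂ) := fun r hr ↦ by
    have h := Real.integral_rpow_mul_exp_neg_mul_Ioi hp hr
    rw [one_div, Real.inv_rpow hr.le, ← Real.rpow_neg hr.le, mul_comm] at h
    have h' := congrArg Complex.ofReal h
    rw [← integral_complex_ofReal, Complex.ofReal_mul, Complex.ofReal_cpow hr.le] at h'
    push_cast at h' ⊢
    exact h'
  have hfreq : ∃ᶠ w in nhdsWithin ((1 : ℝ) : ℂ) {((1 : ℝ) : ℂ)}ᶜ,
      ∫ τ in Set.Ioi (0 : ℝ), ((τ ^ (p - 1) : ℝ) : ℂ) * Complex.exp (-(w * τ)) =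
        Real.Gamma p * w ^ (-p : ℂ) := by
    refine (Complex.continuous_ofReal.continuousAt.continuousWithinAt.tendsto_nhdsWithin
      (fun r hr ↦ ?_) : Filter.Tendsto _ (nhdsWithin (1 : ℝ) {1}ᶜ) _).frequently
      (Filter.Eventually.frequently ?_)
    · simpa using hr
    · filter_upwards [nhdsWithin_le_nhds (lt_mem_nhds one_pos)] with r hr using hreal r hr
  exact ((differentiableOn_integral_rpow_mul_cexp_neg_mul hp).analyticOnNhd
    hopen).eqOn_of_preconnected_of_frequently_eq (hpow.analyticOnNhd hopen) hconn
    (by simp) hfreq hw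

end Laplace

section Fourier

variable {p K : ℝ} {w ζ : ℂ}

theorem integrableOn_exp_div_sqrt_mul_cexp_neg_mul {q D : ℝ} {h : ℝ → ℝ} (hq : -1 / 2 < q)
    (hD : D < ζ.re) (hmeas : Measurable h) (hle : ∀ τ, 0 < τ → |h τ| ≤ τ ^ q) :
    IntegrableOn (fun τ ↦ (Real.exp (D * τ) / √τ : ℝ) * (h τ * Complex.exp (-(ζ * τ))))
      (Set.Ioi 0) := by
  refine (integrableOn_rpow_mul_exp_neg_mul (q := q - 1 / 2) (by linarith)
    (sub_pos.2 hD)).mono' (Measurable.aestronglyMeasurable (by fun_prop)) ?_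
  filter_upwards [ae_restrict_mem measurableSet_Ioi] with τ (hτ : 0 < τ)
  have hexp : Real.exp (-((ζ.re - D) * τ)) = Real.exp (D * τ) * Real.exp (-(ζ.re * τ)) := by
    rw [← Real.exp_add]
    ring_nf
  have hnorm : ‖Complex.exp (-(ζ * τ))‖ = Real.exp (-(ζ.re * τ)) := by simp [Complex.norm_exp]
  rw [norm_mul, norm_mul, hnorm, Complex.norm_real, Complex.norm_real,
    Real.norm_of_nonneg (by positivity), Real.norm_eq_abs, hexp, Real.rpow_sub hτ,
    ← Real.sqrt_eq_rpow]
  calc Real.exp (D * τ) / √τ * (|h τ| * Real.exp (-(ζ.re * τ)))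
      ≤ Real.exp (D * τ) / √τ * (τ ^ q * Real.exp (-(ζ.re * τ))) := by
        gcongr
        exact hle τ hτ
    _ = τ ^ q / √τ * (Real.exp (D * τ) * Real.exp (-(ζ.re * τ))) := by ring

theorem re_sub_mul_im_sq_le_re_mul_sub_sq_add (hK : 0 ≤ K) (w ζ : ℂ) (t : ℝ) :
    ζ.re - K * w.im ^ 2 ≤ (K * (t - w) ^ 2 + ζ).re := by
  have hsq : 0 ≤ K * (t - w.re) ^ 2 := by positivity
  rw [Complex.add_re, re_ofReal_mul_sub_sq]
  linarith

theorem integral_cexp_mul_sub_sq_add_cpow (b : ℝ) (hp : 1 / 2 < p) (hK : 0 < K)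
    (hζ : K * w.im ^ 2 < ζ.re) :
    ∫ t : ℝ, Complex.exp (-(Complex.I * b * t)) * (K * (t - w) ^ 2 + ζ) ^ (-p : ℂ) =
      √(Real.pi / K) / Real.Gamma p * Complex.exp (-(Complex.I * b * w)) *
        ∫ τ in Set.Ioi (0 : ℝ), ((τ ^ (p - 3 / 2) * Real.exp (-(b ^ 2 / K / (4 * τ))) : ℝ) : ℂ) *
          Complex.exp (-(ζ * τ)) := by
  have hp0 : 0 < p := by linarith
  have hΓ : (Real.Gamma p : ℂ) ≠ 0 := mod_cast (Real.Gamma_pos_of_pos hp0).ne'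
  have hlaplace (t : ℝ) : (K * (t - w) ^ 2 + ζ) ^ (-p : ℂ) = (Real.Gamma p : ℂ)⁻¹ *
      ∫ τ in Set.Ioi (0 : ℝ), ((τ ^ (p - 1) : ℝ) * Complex.exp (-(ζ * τ))) *
        Complex.exp (-((K * τ : ℝ) * (t - w) ^ 2)) := by
    rw [eq_inv_mul_iff_mul_eq₀ hΓ,
      ← integral_rpow_mul_cexp_neg_mul_Ioi hp0
        ((sub_pos.2 hζ).trans_le (re_sub_mul_im_sq_le_re_mul_sub_sq_add hK.le w ζ t))]
    congr with τ
    rw [mul_assoc, ← Complex.exp_add]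
    push_cast
    ring_nf
  have hint := integrableOn_exp_div_sqrt_mul_cexp_neg_mul (q := p - 1) (by linarith) hζ
    (h := fun τ ↦ τ ^ (p - 1)) (by fun_prop) fun τ hτ ↦ (abs_of_nonneg (by positivity)).le
  have hkernel (τ : ℝ) (hτ : 0 < τ) : Real.exp (-(b ^ 2 / K / (4 * τ))) / √τ * τ ^ (p - 1) =
      τ ^ (p - 3 / 2) * Real.exp (-(b ^ 2 / K / (4 * τ))) := by
    rw [show p - 3 / 2 = p - 1 - 1 / 2 by ring, Real.rpow_sub hτ (p - 1), ← Real.sqrt_eq_rpow]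
    ring
  simp_rw [hlaplace, mul_left_comm _ (Real.Gamma p : ℂ)⁻¹]
  rw [integral_const_mul, integral_cexp_mul_gaussian_mixture b w hK hint, ← mul_assoc,
    ← mul_assoc, inv_mul_eq_div]
  congr 1
  refine setIntegral_congr_fun measurableSet_Ioi fun τ (hτ : 0 < τ) ↦ ?_
  rw [← hkernel τ hτ]
  push_cast
  ring

variable {L A : ℝ} {z : ℂ}

theorem integral_cexp_mul_quadratic_cpow_eq_gaussian_mixture (a b : ℝ) (hp : 1 / 2 < p)
    (hL : 0 ≤ L) (hK : 0 < K) (hA : L * z.im ^ 2 + K * w.im ^ 2 < A) (s : ℝ) :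
    ∫ t : ℝ, Complex.exp (-(Complex.I * a * s) - Complex.I * b * t) *
        (L * (s - z) ^ 2 + K * (t - w) ^ 2 + A) ^ (-p : ℂ) =
      √(Real.pi / K) / Real.Gamma p * Complex.exp (-(Complex.I * b * w)) *
        (Complex.exp (-(Complex.I * a * s)) * ∫ τ in Set.Ioi (0 : ℝ),
          ((τ ^ (p - 3 / 2) * Real.exp (-(b ^ 2 / K / (4 * τ))) : ℝ) *
            Complex.exp (-(A * τ))) * Complex.exp (-((L * τ : ℝ) * (s - z) ^ 2))) := by
  have hre : K * w.im ^ 2 < (L * (s - z) ^ 2 + A).re := by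
    have := re_sub_mul_im_sq_le_re_mul_sub_sq_add hL z A s
    rw [Complex.ofReal_re] at this
    linarith
  have hfactor (t : ℝ) : Complex.exp (-(Complex.I * a * s) - Complex.I * b * t) *
      (L * (s - z) ^ 2 + K * (t - w) ^ 2 + A) ^ (-p : ℂ) = Complex.exp (-(Complex.I * a * s)) *
        (Complex.exp (-(Complex.I * b * t)) *
          (K * (t - w) ^ 2 + (L * (s - z) ^ 2 + A)) ^ (-p : ℂ)) := by
    rw [sub_eq_add_neg, Complex.exp_add, mul_assoc]
    ring_nf
  have hexp (τ : ℝ) : Complex.exp (-((L * (s - z) ^ 2 + A) * τ)) =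
      Complex.exp (-(A * τ)) * Complex.exp (-((L * τ : ℝ) * (s - z) ^ 2)) := by
    rw [← Complex.exp_add]
    push_cast
    ring_nf
  simp_rw [hfactor]
  rw [integral_const_mul, integral_cexp_mul_sub_sq_add_cpow b hp hK hre]
  simp_rw [hexp, mul_assoc]
  ring

theorem integral_integral_cexp_mul_quadratic_cpow (a b : ℝ) (hp : 1 < p)
    (hL : 0 < L) (hK : 0 < K) (hA : L * z.im ^ 2 + K * w.im ^ 2 < A) :
    ∫ s : ℝ, ∫ t : ℝ, Complex.exp (-(Complex.I * a * s) - Complex.I * b * t) *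
        (L * (s - z) ^ 2 + K * (t - w) ^ 2 + A) ^ (-p : ℂ) =
      √(Real.pi / L) * √(Real.pi / K) / Real.Gamma p *
        Complex.exp (-(Complex.I * a * z) - Complex.I * b * w) *
        (∫ τ in Set.Ioi (0 : ℝ),
          τ ^ (p - 2) * Real.exp (-(A * τ + (a ^ 2 / L + b ^ 2 / K) / (4 * τ))) : ℝ) := by
  have hLA : L * z.im ^ 2 < A := by nlinarith [sq_nonneg w.im]
  have hle (τ : ℝ) (hτ : 0 < τ) :
      |τ ^ (p - 3 / 2) * Real.exp (-(b ^ 2 / K / (4 * τ)))| ≤ τ ^ (p - 3 / 2) := by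
    rw [abs_of_nonneg (by positivity)]
    refine mul_le_of_le_one_right (by positivity) (Real.exp_le_one_iff.2 (neg_nonpos.2 ?_))
    positivity
  have hint := integrableOn_exp_div_sqrt_mul_cexp_neg_mul (ζ := A) (q := p - 3 / 2) (by linarith)
    hLA (by fun_prop) hle
  have hkernel (τ : ℝ) (hτ : 0 < τ) : Real.exp (-(a ^ 2 / L / (4 * τ))) / √τ *
      (τ ^ (p - 3 / 2) * Real.exp (-(b ^ 2 / K / (4 * τ))) * Real.exp (-(A * τ))) =
        τ ^ (p - 2) * Real.exp (-(A * τ + (a ^ 2 / L + b ^ 2 / K) / (4 * τ))) := by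
    rw [show p - 2 = p - 3 / 2 - 1 / 2 by ring, Real.rpow_sub hτ (p - 3 / 2), ← Real.sqrt_eq_rpow,
      add_div, neg_add, neg_add, Real.exp_add, Real.exp_add]
    ring
  simp_rw [integral_cexp_mul_quadratic_cpow_eq_gaussian_mixture a b
    (by linarith : 1 / 2 < p) hL.le hK hA]
  rw [integral_const_mul, integral_cexp_mul_gaussian_mixture a z hL hint,
    sub_eq_add_neg (-(Complex.I * a * z)), Complex.exp_add, ← integral_complex_ofReal,
    ← setIntegral_congr_fun measurableSet_Ioi fun τ (hτ : 0 < τ) ↦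
      congrArg Complex.ofReal (hkernel τ hτ)]
  push_cast
  ring

theorem integral_integral_cexp_mul_quadratic_cpow_eq_besselK {l k α r : ℝ} (a b : ℝ) (hp : 1 < p)
    (hl : 0 < l) (hk : 0 < k) (hα : 0 < α) (hr : 0 < r)
    (hzw : l ^ 2 * z.im ^ 2 + k ^ 2 * w.im ^ 2 < α ^ 2)
    (hab : r ^ 2 = a ^ 2 / l ^ 2 + b ^ 2 / k ^ 2) :
    ∫ s : ℝ, ∫ t : ℝ, Complex.exp (-(Complex.I * a * s) - Complex.I * b * t) *
        ((l : ℂ) ^ 2 * (s - z) ^ 2 + (k : ℂ) ^ 2 * (t - w) ^ 2 + (α : ℂ) ^ 2) ^ (-p : ℂ) =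
      Complex.exp (-(Complex.I * a * z) - Complex.I * b * w) *
        (2 * Real.pi / (l * k * Real.Gamma p) * (r / (2 * α)) ^ (p - 1) *
          besselK (p - 1) (α * r) : ℝ) := by
  have h := integral_integral_cexp_mul_quadratic_cpow a b hp (pow_pos hl 2) (pow_pos hk 2) hzw
  rw [← hab, show p - 2 = p - 1 - 1 by ring, integral_rpow_mul_exp_neg_add_div hα hr,
    Real.sqrt_div' _ (sq_nonneg l), Real.sqrt_div' _ (sq_nonneg k), Real.sqrt_sq hl.le,
    Real.sqrt_sq hk.le] at h
  have hpi : (√Real.pi : ℂ) ^ 2 = Real.pi := mod_cast Real.sq_sqrt Real.pi_pos.le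
  push_cast at h ⊢
  rw [h, ← hpi]
  ring

theorem integral_integral_cexp_mul_inv_quadratic_sq {l k α r : ℝ} (a b : ℝ)
    (hl : 0 < l) (hk : 0 < k) (hα : 0 < α) (hr : 0 < r)
    (hzw : l ^ 2 * z.im ^ 2 + k ^ 2 * w.im ^ 2 < α ^ 2)
    (hab : r ^ 2 = a ^ 2 / l ^ 2 + b ^ 2 / k ^ 2) :
    ∫ s : ℝ, ∫ t : ℝ, Complex.exp (-(Complex.I * a * s) - Complex.I * b * t) *
        (((l : ℂ) ^ 2 * (s - z) ^ 2 + (k : ℂ) ^ 2 * (t - w) ^ 2 + (α : ℂ) ^ 2) ^ 2)⁻¹ =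
      Complex.exp (-(Complex.I * a * z) - Complex.I * b * w) *
        (Real.pi / (l * k * α) * r * besselK 1 (α * r) : ℝ) := by
  have h := integral_integral_cexp_mul_quadratic_cpow_eq_besselK a b one_lt_two hl hk hα hr hzw hab
  have hcpow (Q : ℂ) : Q ^ (-(2 : ℝ) : ℂ) = (Q ^ 2)⁻¹ := by
    rw [Complex.cpow_neg, Complex.ofReal_ofNat, Complex.cpow_ofNat]
  simp_rw [hcpow] at h
  rw [h, show (2 : ℝ) - 1 = 1 by norm_num, Real.rpow_one, Real.Gamma_two]
  congr 2
  ring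

end Fourier

theorem mul_add_sq_add_mul_sub_sq_pos {c d x y : ℝ} (hc : 0 < c) (hd : 0 < d)
    (hxy : (x, y) ≠ (0, 0)) : 0 < c * (x + y) ^ 2 + d * (x - y) ^ 2 := by
  rcases eq_or_ne (x + y) 0 with hadd | hadd
  · have hsub : x - y ≠ 0 := fun hsub ↦ hxy <| by
      rw [show x = 0 by linarith, show y = 0 by linarith]
    positivity
  · positivity

theorem one_div_sqrt_sq_mul_sq_lt_sq {ρ σ : ℝ} (hσ : 0 < 1 - σ) (hξ : 0 < 1 - 2 * ρ ^ 2 + σ) :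
    (1 / √(1 - σ)) ^ 2 * (2 * ρ / (1 - 2 * ρ ^ 2 + σ)) ^ 2 <
      (√(2 * ((1 + σ) / (1 - σ))) / (1 - 2 * ρ ^ 2 + σ)) ^ 2 := by
  have hσ' : 0 < 1 + σ := by nlinarith [sq_nonneg ρ]
  rw [div_pow, div_pow, div_pow, Real.sq_sqrt hσ.le, Real.sq_sqrt (by positivity), one_pow,
    div_mul_div_comm, one_mul, ← mul_div_assoc, div_div]
  gcongr
  linarith

theorem joint_density_n_four_general {lam kap δ α : ℝ} (hlam : 0 < lam) (hkap : 0 < kap)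
    (hα : 0 < α) (hδ : lam ^ 2 * δ ^ 2 < α ^ 2) (x y : ℝ) (hxy : (x, y) ≠ (0, 0)) :
    ((2 * lam ^ 4 * kap ^ 4 / (2 * Real.pi) ^ 2 : ℝ) : ℂ) *
        (∫ s : ℝ, ∫ t : ℝ,
          Complex.exp (-Complex.I * (((x : ℂ) + y) / 2) * s -
              Complex.I * ((-(x : ℂ) + y) / 2) * t) *
            (((lam : ℂ) ^ 2 * ((s : ℂ) - Complex.I * δ) ^ 2 + (kap : ℂ) ^ 2 * (t : ℂ) ^ 2 +
              (α : ℂ) ^ 2) ^ 2)⁻¹) =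
      ((lam ^ 2 * kap ^ 2 / (4 * Real.pi * α) * Real.exp (δ * (x + y) / 2) *
          Real.sqrt (kap ^ 2 * (x + y) ^ 2 + lam ^ 2 * (x - y) ^ 2) *
          besselK 1 (α / (2 * lam * kap) *
            Real.sqrt (kap ^ 2 * (x + y) ^ 2 + lam ^ 2 * (x - y) ^ 2)) : ℝ) : ℂ) := by
  set R := √(kap ^ 2 * (x + y) ^ 2 + lam ^ 2 * (x - y) ^ 2)
  have hR2 : R ^ 2 = kap ^ 2 * (x + y) ^ 2 + lam ^ 2 * (x - y) ^ 2 := Real.sq_sqrt (by positivity)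
  have hR0 : 0 < R := Real.sqrt_pos.2
    (mul_add_sq_add_mul_sub_sq_pos (by positivity) (by positivity) hxy)
  have h := integral_integral_cexp_mul_inv_quadratic_sq (z := Complex.I * δ) (w := 0)
    (r := R / (2 * lam * kap)) ((x + y) / 2) ((-x + y) / 2) hlam hkap hα (by positivity)
    (by simpa using hδ) (by field_simp; linear_combination hR2)
  have hintegrand (s t : ℝ) :
      Complex.exp (-Complex.I * (((x : ℂ) + y) / 2) * s -
          Complex.I * ((-(x : ℂ) + y) / 2) * t) *
        (((lam : ℂ) ^ 2 * ((s : ℂ) - Complex.I * δ) ^ 2 + (kap : ℂ) ^ 2 * (t : ℂ) ^ 2 +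
          (α : ℂ) ^ 2) ^ 2)⁻¹ =
      Complex.exp (-(Complex.I * ((x + y) / 2 : ℝ) * s) - Complex.I * ((-x + y) / 2 : ℝ) * t) *
        (((lam : ℂ) ^ 2 * (s - Complex.I * δ) ^ 2 + (kap : ℂ) ^ 2 * (t - 0) ^ 2 +
          (α : ℂ) ^ 2) ^ 2)⁻¹ := by
    push_cast
    ring_nf
  have hexp : Complex.exp (-(Complex.I * ((x + y) / 2 : ℝ) * (Complex.I * δ)) -
      Complex.I * ((-x + y) / 2 : ℝ) * 0) = Real.exp (δ * (x + y) / 2) := by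
    rw [Complex.ofReal_exp]
    congr 1
    push_cast
    linear_combination (-(x + y) / 2 * δ : ℂ) * Complex.I_sq
  simp_rw [hintegrand]
  rw [h, hexp, mul_div_assoc' α, mul_div_right_comm]
  norm_cast
  field_simp
  ring

theorem joint_density_n_four (ρ σ : ℝ) (h1 : 1 - σ ^ 2 > 0) (h2 : 1 - 2 * ρ ^ 2 + σ > 0)
    (ξ η lam kap δ α : ℝ) (hξ : ξ = 1 - 2 * ρ ^ 2 + σ) (hη : η = (1 + σ) / (1 - σ))
    (hlam : lam = 1 / Real.sqrt (1 - σ)) (hkap : kap = 1 / Real.sqrt (1 - 2 * ρ ^ 2 + σ))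
    (hδ : δ = 2 * ρ / ξ) (hα : α = Real.sqrt (2 * η) / ξ) :
    ∀ x y : ℝ, (x, y) ≠ (0, 0) →
      ((2 * lam ^ 4 * kap ^ 4 / (2 * Real.pi) ^ 2 : ℝ) : ℂ) *
        (∫ s : ℝ, ∫ t : ℝ,
          Complex.exp (-Complex.I * (((x : ℂ) + y) / 2) * s -
              Complex.I * ((-(x : ℂ) + y) / 2) * t) *
            (((lam : ℂ) ^ 2 * ((s : ℂ) - Complex.I * δ) ^ 2 + (kap : ℂ) ^ 2 * (t : ℂ) ^ 2 +
              (α : ℂ) ^ 2) ^ 2)⁻¹) =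
      ((lam ^ 2 * kap ^ 2 / (4 * Real.pi * α) * Real.exp (δ * (x + y) / 2) *
          Real.sqrt (kap ^ 2 * (x + y) ^ 2 + lam ^ 2 * (x - y) ^ 2) *
          besselK 1 (α / (2 * lam * kap) *
            Real.sqrt (kap ^ 2 * (x + y) ^ 2 + lam ^ 2 * (x - y) ^ 2)) : ℝ) : ℂ) := by
  have hσ' : 0 < 1 + σ := by nlinarith [sq_nonneg ρ]
  have hσ : 0 < 1 - σ := by nlinarith
  subst hξ hη hlam hkap hδ hα
  exact joint_density_n_four_general (by positivity) (by positivity) (by positivity)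
    (one_div_sqrt_sq_mul_sq_lt_sq hσ h2)
end

section
/- Let γ > 0, λ > 0, α > 0, δ ∈ ℝ with α > λ|δ|, and c ∈ ℝ. Then ∫_ℝ K₀(γ·√(λ²(s−iδ)² + α²))·exp(−ics) ds = π·exp(cδ)·exp(−(α/λ)·√(γ²λ² + c²))/√(γ²λ² + c²), where the inner complex square root is the principal branch (its argument has positive real part since α² > λ²δ²), and K₀(z) = ∫₀^∞ exp(−z cosh t) dt for Re z > 0. -/
open MeasureTheory

/-- The modified Bessel function of the second kind `K₀(z)` for complex argument with
positive real part, defined by `K₀(z) = ∫₀^∞ exp(-z cosh t) dt`. -/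
noncomputable def besselK0 (z : ℂ) : ℂ :=
  ∫ t in Set.Ioi (0 : ℝ), Complex.exp (-z * Real.cosh t)

/-!
For `b > 0` and `Re w > 0`,
`K₀(b √w) = ½ ∫_ℝ exp(-(w eᵗ + b² e⁻ᵗ)/2) dt`:
for real `w` this is the definition after a translation of `t`, and both sides are analytic in `w`.
Inserting `w = (s - iδ)² + β²` makes the integrand Gaussian in `s`. By Fubini, the Fourier transform
of `s ↦ K₀(x √w)` is therefore a constant multiple of
`∫_ℝ exp(-t/2 - (β² eᵗ + (x² + c²) e⁻ᵗ)/2) dt`.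
Translating `t` again reduces this to `∫_ℝ cosh(t/2) exp(-r cosh t) dt` with `r = β √(x² + c²)`, the
integral of the elementary Bessel function `K_{1/2}`, where `u = sinh(t/2)` gives a Gaussian.
-/

section HyperbolicIntegrals

open Real (exp cosh sinh log)
open scoped Real

lemma integral_cosh_smul_comp_sinh {E : Type*} [NormedAddCommGroup E] [NormedSpace ℝ E]
    (f : ℝ → E) : ∫ t, cosh t • f (sinh t) = ∫ u, f u := by
  have h := integral_image_eq_integral_deriv_smul_of_monotoneOn MeasurableSet.univ
    (fun t _ ↦ (Real.hasDerivAt_sinh t).hasDerivWithinAt)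
    (Real.sinh_strictMono.monotone.monotoneOn _) f
  simpa only [Set.image_univ, Real.sinh_surjective.range_eq, setIntegral_univ] using h.symm

lemma sq_div_four_le_cosh (t : ℝ) : t ^ 2 / 4 ≤ cosh t := by
  rw [← Real.cosh_abs, ← sq_abs, Real.cosh_eq]
  linarith [Real.quadratic_le_exp_of_nonneg (abs_nonneg t), abs_nonneg t, Real.exp_pos (-|t|)]

lemma integrable_exp_mul_sub_mul_cosh (p : ℝ) {r : ℝ} (hr : 0 < r) :
    Integrable fun t : ℝ ↦ exp (p * t - r * cosh t) := by
  have hgauss : Integrable fun t : ℝ ↦ Complex.exp (-(r / 4 : ℝ) * t ^ 2 + p * t + 0) :=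
    integrable_cexp_quadratic (by rw [Complex.ofReal_re]; positivity) _ _
  refine hgauss.mono (by fun_prop) (ae_of_all _ fun t ↦ ?_)
  rw [Real.norm_eq_abs, Real.abs_exp, Complex.norm_exp, Real.exp_le_exp]
  norm_cast
  linarith [mul_le_mul_of_nonneg_left (sq_div_four_le_cosh t) hr.le]

lemma integral_exp_mul_sub_mul_cosh (p : ℝ) {r : ℝ} (hr : 0 < r) :
    ∫ t, exp (p * t - r * cosh t) = ∫ t, cosh (p * t) * exp (-(r * cosh t)) := by
  have hneg : ∫ t, exp (-p * t - r * cosh t) = ∫ t, exp (p * t - r * cosh t) := by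
    rw [← integral_neg_eq_self]
    simp only [mul_neg, neg_mul, neg_neg, Real.cosh_neg]
  have hsum : ∫ t, (exp (p * t - r * cosh t) + exp (-p * t - r * cosh t)) =
      2 * ∫ t, cosh (p * t) * exp (-(r * cosh t)) := by
    rw [← integral_const_mul]
    congr 1 with t
    rw [Real.cosh_eq (p * t), sub_eq_add_neg, sub_eq_add_neg, Real.exp_add, Real.exp_add, neg_mul]
    ring
  rw [integral_add (integrable_exp_mul_sub_mul_cosh p hr)
    (integrable_exp_mul_sub_mul_cosh (-p) hr), hneg] at hsum
  linarith

lemma integral_exp_neg_half_mul_sub_mul_cosh {r : ℝ} (hr : 0 < r) :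
    ∫ t, exp (-(1 / 2) * t - r * cosh t) = √(2 * π / r) * exp (-r) := by
  have hcosh (u : ℝ) : -(r * cosh (2 * u)) = -r + -(2 * r) * sinh u ^ 2 := by
    rw [Real.cosh_two_mul, Real.cosh_sq]
    ring
  calc ∫ t, exp (-(1 / 2) * t - r * cosh t)
      = ∫ t, cosh (-(1 / 2) * t) * exp (-(r * cosh t)) := integral_exp_mul_sub_mul_cosh _ hr
    _ = 2 * ∫ u, cosh u * exp (-(r * cosh (2 * u))) := by
        rw [← smul_eq_mul, ← abs_two, ← Measure.integral_comp_div _ (2 : ℝ), abs_two]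
        congr 1 with t
        rw [neg_mul, Real.cosh_neg, one_div_mul_eq_div, mul_div_cancel₀ _ two_ne_zero]
    _ = 2 * ∫ u, exp (-r) * exp (-(2 * r) * u ^ 2) := by
        rw [← integral_cosh_smul_comp_sinh fun u ↦ exp (-r) * exp (-(2 * r) * u ^ 2)]
        simp only [hcosh, Real.exp_add, smul_eq_mul]
    _ = √(2 * π / r) * exp (-r) := by
        rw [integral_const_mul, integral_gaussian,
          show 2 * π / r = 2 ^ 2 * (π / (2 * r)) by field_simp, Real.sqrt_mul (by positivity),
          Real.sqrt_sq (by positivity)]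
        ring

variable {a b : ℝ}

lemma sq_mul_exp_add_sq_mul_exp_neg (ha : 0 < a) (hb : 0 < b) (t : ℝ) :
    (a ^ 2 * exp t + b ^ 2 * exp (-t)) / 2 = a * b * cosh (t + log (a / b)) := by
  rw [Real.cosh_eq, neg_add, Real.exp_add, Real.exp_add, Real.exp_neg (log _),
    Real.exp_log (div_pos ha hb)]
  field_simp

lemma exp_mul_sub_sq_mul_exp_add_sq_mul_exp_neg (p : ℝ) (ha : 0 < a) (hb : 0 < b) (t : ℝ) :
    exp (p * t - (a ^ 2 * exp t + b ^ 2 * exp (-t)) / 2) =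
      (b / a) ^ p * exp (p * (t + log (a / b)) - a * b * cosh (t + log (a / b))) := by
  rw [sq_mul_exp_add_sq_mul_exp_neg ha hb, Real.rpow_def_of_pos (div_pos hb ha), ← Real.exp_add,
    ← inv_div a b, Real.log_inv]
  congr 1
  ring

lemma integrable_exp_mul_sub_sq_mul_exp_add_sq_mul_exp_neg (p : ℝ) (ha : 0 < a) (hb : 0 < b) :
    Integrable fun t : ℝ ↦ exp (p * t - (a ^ 2 * exp t + b ^ 2 * exp (-t)) / 2) := by
  simp only [exp_mul_sub_sq_mul_exp_add_sq_mul_exp_neg p ha hb]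
  exact ((integrable_exp_mul_sub_mul_cosh p (mul_pos ha hb)).comp_add_right _).const_mul _

lemma integral_exp_mul_sub_sq_mul_exp_add_sq_mul_exp_neg (p : ℝ) (ha : 0 < a) (hb : 0 < b) :
    ∫ t, exp (p * t - (a ^ 2 * exp t + b ^ 2 * exp (-t)) / 2) =
      (b / a) ^ p * ∫ t, exp (p * t - a * b * cosh t) := by
  simp only [exp_mul_sub_sq_mul_exp_add_sq_mul_exp_neg p ha hb]
  rw [integral_const_mul,
    integral_add_right_eq_self (fun t ↦ exp (p * t - a * b * cosh t)) (log (a / b))]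

lemma integral_exp_neg_half_mul_sub_sq_mul_exp_add_sq_mul_exp_neg (ha : 0 < a) (hb : 0 < b) :
    ∫ t, exp (-(1 / 2) * t - (a ^ 2 * exp t + b ^ 2 * exp (-t)) / 2) =
      √(2 * π) / b * exp (-(a * b)) := by
  have hscale : (b / a) ^ (-(1 / 2) : ℝ) * √(2 * π / (a * b)) = √(2 * π) / b := by
    rw [Real.rpow_neg (by positivity), ← Real.sqrt_eq_rpow, ← Real.sqrt_inv, inv_div,
      ← Real.sqrt_mul (by positivity), show a / b * (2 * π / (a * b)) = 2 * π / b ^ 2 by field_simp,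
      Real.sqrt_div (by positivity), Real.sqrt_sq hb.le]
  rw [integral_exp_mul_sub_sq_mul_exp_add_sq_mul_exp_neg _ ha hb,
    integral_exp_neg_half_mul_sub_mul_cosh (mul_pos ha hb), ← mul_assoc, hscale]

end HyperbolicIntegrals

section Analyticity

open Filter Topology ProbabilityTheory

lemma analyticAt_integral_cexp_mul_add {Ω : Type*} {mΩ : MeasurableSpace Ω} {μ : Measure Ω}
    {X Y : Ω → ℝ} (hY : AEMeasurable Y μ) {z : ℂ}
    (hz : z.re ∈ interior {p : ℝ | Integrable (fun ω ↦ Real.exp (p * X ω + Y ω)) μ}) :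
    AnalyticAt ℂ (fun z : ℂ ↦ ∫ ω, Complex.exp (z * X ω + Y ω) ∂μ) z := by
  -- Weighting `μ` by `exp Y` turns the integral into a moment generating function of `X`.
  set ν : Measure Ω := μ.withDensity fun ω ↦ ENNReal.ofReal (Real.exp (Y ω))
  have hdens : AEMeasurable (fun ω ↦ ENNReal.ofReal (Real.exp (Y ω))) μ := by fun_prop
  have hfin : ∀ᵐ ω ∂μ, ENNReal.ofReal (Real.exp (Y ω)) < ⊤ :=
    ae_of_all _ fun _ ↦ ENNReal.ofReal_lt_top
  have htoReal (ω : Ω) : (ENNReal.ofReal (Real.exp (Y ω))).toReal = Real.exp (Y ω) :=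
    ENNReal.toReal_ofReal (Real.exp_pos _).le
  have hset : integrableExpSet X ν = {p | Integrable (fun ω ↦ Real.exp (p * X ω + Y ω)) μ} := by
    ext p
    rw [integrableExpSet, Set.mem_ofPred_eq, Set.mem_ofPred_eq,
      integrable_withDensity_iff_integrable_smul₀' hdens hfin]
    simp only [htoReal, smul_eq_mul, ← Real.exp_add, add_comm]
  have hmgf : complexMGF X ν = fun z : ℂ ↦ ∫ ω, Complex.exp (z * X ω + Y ω) ∂μ := by
    ext z
    rw [complexMGF, integral_withDensity_eq_integral_toReal_smul₀ hdens hfin]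
    simp only [htoReal, Complex.real_smul, Complex.ofReal_exp, ← Complex.exp_add, add_comm]
  rw [← hset] at hz
  exact hmgf ▸ analyticAt_complexMGF hz

lemma eqOn_re_pos_of_forall_ofReal_eq {E : Type*} [NormedAddCommGroup E] [NormedSpace ℂ E]
    {f g : ℂ → E} (hf : AnalyticOnNhd ℂ f {w | 0 < w.re}) (hg : AnalyticOnNhd ℂ g {w | 0 < w.re})
    (hfg : ∀ x : ℝ, 0 < x → f x = g x) : Set.EqOn f g {w | 0 < w.re} := by
  have hlim : Tendsto ((↑) : ℝ → ℂ) (𝓝[≠] 1) (𝓝[≠] ((1 : ℝ) : ℂ)) :=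
    Complex.continuous_ofReal.continuousWithinAt.tendsto_nhdsWithin
      fun _ hx ↦ Complex.ofReal_injective.ne hx
  have hev : ∀ᶠ x : ℝ in 𝓝[≠] 1, f x = g x :=
    ((lt_mem_nhds one_pos).filter_mono nhdsWithin_le_nhds).mono hfg
  exact hf.eqOn_of_preconnected_of_frequently_eq hg (convex_halfSpace_re_gt 0).isPreconnected
    (by simp) (hlim.frequently hev.frequently)

end Analyticity

section BesselK0

open ProbabilityTheory

lemma re_sqrt_pos_of_mem_slitPlane {w : ℂ} (hw : w ∈ Complex.slitPlane) : 0 < w.sqrt.re := by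
  have hpos : 0 < ‖w‖ + w.re := by
    rcases hw with hre | him
    · positivity
    · linarith [neg_abs_le w.re, Complex.abs_re_lt_norm.2 him]
  rw [Complex.sqrt, Complex.cpow_inv_two_re]
  positivity

lemma sqrt_sq_mul {r : ℝ} (hr : 0 ≤ r) (w : ℂ) :
    Complex.sqrt ((r : ℂ) ^ 2 * w) = r * w.sqrt := by
  rcases hr.eq_or_lt with rfl | hr
  · simp
  rcases eq_or_ne w 0 with rfl | hw
  · simp
  have hr' : (r : ℂ) ≠ 0 := Complex.ofReal_ne_zero.2 hr.ne'
  rw [sqrt_eq_exp (mul_ne_zero (pow_ne_zero 2 hr') hw), sqrt_eq_exp hw, ← Complex.ofReal_pow,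
    Complex.log_ofReal_mul (pow_pos hr 2) hw, Real.log_pow, add_div, Complex.exp_add]
  push_cast
  rw [mul_div_cancel_left₀ _ two_ne_zero, Complex.ofReal_log hr.le, Complex.exp_log hr']

lemma analyticAt_besselK0 {z : ℂ} (hz : 0 < z.re) : AnalyticAt ℂ besselK0 z := by
  have hsub : Set.Iio 0 ⊆ interior (integrableExpSet Real.cosh (volume.restrict (Set.Ioi 0))) := by
    refine interior_maximal (fun p (hp : p < 0) ↦ ?_) isOpen_Iio
    have h := integrable_exp_mul_sub_mul_cosh 0 (neg_pos.2 hp)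
    simp only [zero_mul, zero_sub, neg_mul, neg_neg] at h
    exact h.integrableOn
  have hmgf : AnalyticAt ℂ (complexMGF Real.cosh (volume.restrict (Set.Ioi 0))) (-z) :=
    analyticAt_complexMGF (hsub (by simpa using hz))
  exact hmgf.comp_of_eq analyticAt_id.neg rfl

lemma besselK0_ofReal (x : ℝ) :
    besselK0 x = ((∫ t, Real.exp (-(x * Real.cosh t))) / 2 : ℝ) := by
  have heven := integral_comp_abs (f := fun t ↦ Real.exp (-(x * Real.cosh t)))
  simp only [Real.cosh_abs] at heven
  rw [heven, besselK0, mul_div_cancel_left₀ _ two_ne_zero, ← integral_complex_ofReal]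
  push_cast
  simp only [neg_mul]

lemma besselK0_ofReal_mul {a b : ℝ} (ha : 0 < a) (hb : 0 < b) :
    besselK0 (a * b : ℝ) =
      ((∫ t, Real.exp (-(a ^ 2 * Real.exp t + b ^ 2 * Real.exp (-t)) / 2)) / 2 : ℝ) := by
  have h := integral_exp_mul_sub_sq_mul_exp_add_sq_mul_exp_neg 0 ha hb
  simp only [zero_mul, zero_sub, Real.rpow_zero, one_mul] at h
  simp only [besselK0_ofReal, neg_div, h]

lemma analyticAt_integral_cexp_mul_exp_add_sq_mul_exp_neg {b : ℝ} (hb : 0 < b) {w : ℂ}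
    (hw : 0 < w.re) :
    AnalyticAt ℂ (fun w : ℂ ↦ ∫ t : ℝ,
      Complex.exp (-(w * Complex.exp t + b ^ 2 * Complex.exp (-t)) / 2)) w := by
  have hsub : Set.Iio 0 ⊆ interior {p : ℝ | Integrable fun t ↦
      Real.exp (p * Real.exp t + -(b ^ 2 / 2 * Real.exp (-t)))} := by
    refine interior_maximal (fun p (hp : p < 0) ↦ ?_) isOpen_Iio
    have hp' : 0 < 2 * -p := by linarith
    have h := integrable_exp_mul_sub_sq_mul_exp_add_sq_mul_exp_neg 0 (Real.sqrt_pos.2 hp') hb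
    refine h.congr (ae_of_all _ fun t ↦ ?_)
    simp only [Real.sq_sqrt hp'.le]
    congr 1
    ring
  have hmgf : AnalyticAt ℂ (fun z : ℂ ↦ ∫ t : ℝ, Complex.exp (z * (Real.exp t : ℝ) +
      (-(b ^ 2 / 2 * Real.exp (-t)) : ℝ))) (-w / 2) := by
    refine analyticAt_integral_cexp_mul_add (by fun_prop) (hsub ?_)
    rw [Set.mem_Iio, Complex.div_ofNat_re, Complex.neg_re]
    linarith
  refine (hmgf.comp_of_eq (analyticAt_id.neg.div_const (c := 2)) rfl).congr
    (.of_forall fun w ↦ integral_congr_ae (ae_of_all _ fun t ↦ ?_))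
  simp only [Pi.neg_apply, id]
  push_cast
  congr 1
  ring

lemma besselK0_mul_sqrt {b : ℝ} (hb : 0 < b) {w : ℂ} (hw : 0 < w.re) :
    besselK0 (b * w.sqrt) =
      (∫ t : ℝ, Complex.exp (-(w * Complex.exp t + b ^ 2 * Complex.exp (-t)) / 2)) / 2 := by
  refine eqOn_re_pos_of_forall_ofReal_eq (f := fun w ↦ besselK0 (b * w.sqrt))
    (fun w (hw : 0 < w.re) ↦ ?_)
    (fun w hw ↦ (analyticAt_integral_cexp_mul_exp_add_sq_mul_exp_neg hb hw).div_const)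
    (fun x hx ↦ ?_) hw
  · have hslit : w ∈ Complex.slitPlane := Or.inl hw
    have hsqrt : AnalyticAt ℂ Complex.sqrt w :=
      Complex.differentiableOn_sqrt.analyticOnNhd Complex.isOpen_slitPlane w hslit
    have hre : 0 < (b * w.sqrt).re := by
      rw [Complex.re_ofReal_mul]
      exact mul_pos hb (re_sqrt_pos_of_mem_slitPlane hslit)
    exact (analyticAt_besselK0 hre).comp_of_eq (analyticAt_const.mul hsqrt) rfl
  · have hsqrt : Complex.sqrt x = (√x : ℝ) := by
      rw [Complex.sqrt_of_nonneg (Complex.zero_le_real.2 hx.le), Complex.ofReal_re]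
    rw [hsqrt, mul_comm, ← Complex.ofReal_mul, besselK0_ofReal_mul (Real.sqrt_pos.2 hx) hb,
      Real.sq_sqrt hx.le, Complex.ofReal_div, ← integral_complex_ofReal]
    push_cast
    rfl

end BesselK0

section Gaussian

variable {b : ℂ} (z c : ℂ)

lemma neg_mul_sub_sq_sub_mul_eq_quadratic (s : ℂ) :
    -b * (s - z) ^ 2 - c * s = -b * s ^ 2 + (2 * b * z - c) * s + -(b * z ^ 2) := by
  ring

lemma integrable_cexp_neg_mul_sub_sq_sub_mul (hb : 0 < b.re) :
    Integrable fun s : ℝ ↦ Complex.exp (-b * (s - z) ^ 2 - c * s) := by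
  simp only [neg_mul_sub_sq_sub_mul_eq_quadratic]
  exact integrable_cexp_quadratic hb _ _

lemma integral_cexp_neg_mul_sub_sq_sub_mul (hb : 0 < b.re) :
    ∫ s : ℝ, Complex.exp (-b * (s - z) ^ 2 - c * s) =
      Complex.sqrt (Real.pi / b) * Complex.exp (c ^ 2 / (4 * b) - c * z) := by
  have hb0 : b ≠ 0 := Complex.ne_zero_of_re_pos hb
  simp only [neg_mul_sub_sq_sub_mul_eq_quadratic]
  rw [integral_cexp_quadratic (by rwa [Complex.neg_re, neg_neg_iff_pos]), neg_neg, one_div]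
  congr 2
  field_simp
  ring

end Gaussian

section FourierTransform

open Real (exp)

lemma integral_exp_neg_half_exp_mul_sq (t : ℝ) :
    ∫ s, exp (-(exp t / 2) * s ^ 2) = √(2 * Real.pi) * exp (-(1 / 2) * t) := by
  rw [integral_gaussian, show Real.pi / (exp t / 2) = 2 * Real.pi * exp (-t) by
    rw [Real.exp_neg]; field_simp, Real.sqrt_mul (by positivity), ← Real.exp_half]
  congr 2
  ring

lemma re_sub_I_mul_sq (s δ : ℝ) : ((s - Complex.I * δ : ℂ) ^ 2).re = s ^ 2 - δ ^ 2 := by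
  simp [pow_two]

/-- The kernel whose `t`-integral is `2 K₀(x √((s - iδ)² + β²)) exp(-ics)`; it is Gaussian in `s`
for fixed `t`. -/
noncomputable def besselFourierKernel (x β δ c s t : ℝ) : ℂ :=
  Complex.exp (-(((s - Complex.I * δ) ^ 2 + β ^ 2) * Complex.exp t +
    x ^ 2 * Complex.exp (-t)) / 2) * Complex.exp (-Complex.I * c * s)

variable (x β δ c : ℝ)

lemma besselFourierKernel_eq_gaussian (s t : ℝ) :
    besselFourierKernel x β δ c s t =
      (exp (-(β ^ 2 * exp t + x ^ 2 * exp (-t)) / 2) : ℝ) *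
        Complex.exp (-(exp t / 2 : ℝ) * (s - Complex.I * δ) ^ 2 - Complex.I * c * s) := by
  rw [besselFourierKernel, Complex.ofReal_exp, ← Complex.exp_add, ← Complex.exp_add]
  push_cast
  congr 1
  ring

lemma norm_besselFourierKernel (s t : ℝ) :
    ‖besselFourierKernel x β δ c s t‖ =
      exp (-((β ^ 2 - δ ^ 2) * exp t + x ^ 2 * exp (-t)) / 2) * exp (-(exp t / 2) * s ^ 2) := by
  have hre : (-(exp t / 2 : ℝ) * (s - Complex.I * δ) ^ 2 - Complex.I * c * s).re =
      exp t / 2 * (δ ^ 2 - s ^ 2) := by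
    rw [← Complex.ofReal_neg, Complex.sub_re, Complex.re_ofReal_mul, re_sub_I_mul_sq, mul_assoc,
      ← Complex.ofReal_mul, Complex.I_mul_re, Complex.ofReal_im]
    ring
  rw [besselFourierKernel_eq_gaussian, norm_mul, Complex.norm_real, Real.norm_eq_abs, Real.abs_exp,
    Complex.norm_exp, hre, ← Real.exp_add, ← Real.exp_add]
  congr 1
  ring

lemma integrable_besselFourierKernel_left (t : ℝ) :
    Integrable fun s ↦ besselFourierKernel x β δ c s t := by
  simp only [besselFourierKernel_eq_gaussian]
  exact (integrable_cexp_neg_mul_sub_sq_sub_mul _ _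
    (by rw [Complex.ofReal_re]; positivity)).const_mul _

lemma integral_besselFourierKernel_left (t : ℝ) :
    ∫ s, besselFourierKernel x β δ c s t =
      (√(2 * Real.pi) * exp (c * δ) *
        exp (-(1 / 2) * t - (β ^ 2 * exp t + (x ^ 2 + c ^ 2) * exp (-t)) / 2) : ℝ) := by
  have hsqrt : Complex.sqrt (Real.pi / (exp t / 2 : ℝ)) =
      (√(2 * Real.pi) * exp (-(1 / 2) * t) : ℝ) := by
    rw [← Complex.ofReal_div, Complex.sqrt_of_nonneg (Complex.zero_le_real.2 (by positivity)),
      Complex.ofReal_re, ← integral_gaussian, integral_exp_neg_half_exp_mul_sq]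
  have hexp : (Complex.I * c) ^ 2 / (4 * (exp t / 2 : ℝ)) - Complex.I * c * (Complex.I * δ) =
      (c * δ - c ^ 2 * exp (-t) / 2 : ℝ) := by
    rw [mul_pow, Complex.I_sq, mul_mul_mul_comm, Complex.I_mul_I, Real.exp_neg]
    push_cast
    field_simp
    ring
  simp only [besselFourierKernel_eq_gaussian]
  rw [integral_const_mul, integral_cexp_neg_mul_sub_sq_sub_mul _ _
    (by rw [Complex.ofReal_re]; positivity), hsqrt, hexp]
  norm_cast
  rw [mul_assoc √_, mul_assoc √_, mul_left_comm, ← Real.exp_add, ← Real.exp_add, ← Real.exp_add]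
  congr 2
  ring

variable {x β δ}

lemma integrable_besselFourierKernel (hx : 0 < x) (hδ : |δ| < β) :
    Integrable (Function.uncurry (besselFourierKernel x β δ c)) (volume.prod volume) := by
  have hcont : Continuous (Function.uncurry (besselFourierKernel x β δ c)) := by
    unfold besselFourierKernel Function.uncurry
    fun_prop
  have hsub : 0 < β ^ 2 - δ ^ 2 := sub_pos.2 (sq_lt_sq.2 (hδ.trans_le (le_abs_self β)))
  refine (integrable_prod_iff' hcont.aestronglyMeasurable).2
    ⟨ae_of_all _ (integrable_besselFourierKernel_left x β δ c), ?_⟩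
  refine ((integrable_exp_mul_sub_sq_mul_exp_add_sq_mul_exp_neg (-(1 / 2)) (Real.sqrt_pos.2 hsub)
    hx).const_mul √(2 * Real.pi)).congr (ae_of_all _ fun t ↦ ?_)
  simp only [Function.uncurry_apply_pair, norm_besselFourierKernel]
  rw [integral_const_mul, integral_exp_neg_half_exp_mul_sq, mul_left_comm, ← Real.exp_add,
    Real.sq_sqrt hsub.le]
  congr 2
  ring

lemma besselK0_mul_sqrt_mul_cexp_eq_integral (hx : 0 < x) (hδ : |δ| < β) (s : ℝ) :
    besselK0 (x * Complex.sqrt ((s - Complex.I * δ) ^ 2 + β ^ 2)) *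
        Complex.exp (-Complex.I * c * s) =
      (∫ t, besselFourierKernel x β δ c s t) / 2 := by
  have hpos : 0 < ((s - Complex.I * δ) ^ 2 + β ^ 2 : ℂ).re := by
    rw [Complex.add_re, re_sub_I_mul_sq, ← Complex.ofReal_pow, Complex.ofReal_re]
    linarith [sq_nonneg s, sq_lt_sq.2 (hδ.trans_le (le_abs_self β))]
  rw [besselK0_mul_sqrt hx hpos, div_mul_eq_mul_div, ← integral_mul_const]
  rfl

theorem integral_besselK0_mul_sqrt_mul_cexp (hx : 0 < x) (hδ : |δ| < β) :
    ∫ s : ℝ, besselK0 (x * Complex.sqrt ((s - Complex.I * δ) ^ 2 + β ^ 2)) *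
        Complex.exp (-Complex.I * c * s) =
      (Real.pi * exp (c * δ) * exp (-(β * √(x ^ 2 + c ^ 2))) / √(x ^ 2 + c ^ 2) : ℝ) := by
  have hβ : 0 < β := (abs_nonneg δ).trans_lt hδ
  have hxc : 0 < x ^ 2 + c ^ 2 := by positivity
  simp only [besselK0_mul_sqrt_mul_cexp_eq_integral c hx hδ]
  rw [integral_div, integral_integral_swap (integrable_besselFourierKernel c hx hδ)]
  simp only [integral_besselFourierKernel_left]
  have hint := integral_exp_neg_half_mul_sub_sq_mul_exp_add_sq_mul_exp_neg hβ
    (Real.sqrt_pos.2 hxc)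
  simp only [Real.sq_sqrt hxc.le] at hint
  rw [integral_complex_ofReal, integral_const_mul, hint]
  norm_cast
  linear_combination (exp (c * δ) * exp (-(β * √(x ^ 2 + c ^ 2))) / √(x ^ 2 + c ^ 2) / 2) *
    Real.sq_sqrt (show 0 ≤ 2 * Real.pi by positivity)

end FourierTransform

theorem outer_fourier_integral_n_one (γ lam α δ : ℝ) (hγ : 0 < γ) (hlam : 0 < lam)
    (hα : 0 < α) (hαδ : lam * |δ| < α) (c : ℝ) :
    (∫ s : ℝ, besselK0 ((γ : ℂ) *
        (((lam : ℂ) ^ 2 * ((s : ℂ) - Complex.I * δ) ^ 2 + (α : ℂ) ^ 2) ^ ((1 : ℂ) / 2))) *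
        Complex.exp (-Complex.I * c * s)) =
    ((Real.pi * Real.exp (c * δ) *
        Real.exp (-(α / lam) * Real.sqrt (γ ^ 2 * lam ^ 2 + c ^ 2)) /
        Real.sqrt (γ ^ 2 * lam ^ 2 + c ^ 2) : ℝ) : ℂ) := by
  have hδ : |δ| < α / lam := by rwa [lt_div_iff₀' hlam]
  have hscale (s : ℝ) : (γ : ℂ) *
      ((lam : ℂ) ^ 2 * ((s : ℂ) - Complex.I * δ) ^ 2 + (α : ℂ) ^ 2) ^ ((1 : ℂ) / 2) =
      (γ * lam : ℝ) * Complex.sqrt ((s - Complex.I * δ) ^ 2 + (α / lam : ℝ) ^ 2) := by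
    have hlam' : (lam : ℂ) ≠ 0 := Complex.ofReal_ne_zero.2 hlam.ne'
    rw [Complex.ofReal_mul, mul_assoc, ← sqrt_sq_mul hlam.le, Complex.ofReal_div, one_div,
      show (lam : ℂ) ^ 2 * ((s - Complex.I * δ) ^ 2 + (α / lam) ^ 2) =
        lam ^ 2 * (s - Complex.I * δ) ^ 2 + α ^ 2 by field_simp]
    rfl
  simp only [hscale]
  rw [integral_besselK0_mul_sqrt_mul_cexp c (mul_pos hγ hlam) hδ, mul_pow, neg_mul]
end
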